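/- Let d≥1 and λ>0 be constants with λ<λ_c(d). Then for any constants D>0 and ε>0, with high probability over the choice of G∼G(n,d/n), the marginal distribution μ_{G,λ,U} of the hard-core distribution μ_{G,λ} on U, where U is the set of vertices of G of degree at most D, is (ε·log n)-spectrally independent. -/

import Mathlib

/-!
By continuity of `λ_c` there is some `Δ > d` with `λ ≤ λ_c(Δ)`; fix a discount `θ` with
`1 / Δ < θ < 1 / d`, and let `saw θ` count self-avoiding walks with weight `θ ^ length`. The proof
compares influences in the hard-core model with these weighted counts, and shows that the counts
are `O(log n)` in `G(n, d/n)`.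

*Influences.* Passing from `v` vacant to `v` occupied deletes the neighbours of `v`. Deleting them one
at a time changes the remaining occupation probabilities by at most the occupation probability of
each deleted vertex times its own influence in a smaller graph (`sum_erase_sub`, `telescope`). This
is a recursion over self-avoiding walks, of the kind Weitz's tree encodes. Below `λ_c(Δ)` the
recursion contracts in an `ℓ^{2b}` sense (`contraction`), and Hölder's inequality turns this into a
bound by a power `γ < 1` of the number of walks (`contraction_holder`). Hence the total influence of
`v`, in every induced subgraph, is at most `∑ C * (saw θ at u) ^ γ` over the neighbours `u` of `v`
(`infl_le_saw`).

*Walks.* The weighted count `saw θ` is the expected number of self-avoiding walks surviving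
`θ`-percolation (`Ex_saw`), and the percolated graph is the subcritical `G(n, dθ/n)`. There the number
of walks from `v` exceeds the size of its cluster only by `O(1/n)` in expectation (`Ex_saw_sub_cl`),
while the cluster size has exponential moments (`Ex_exp_clA`). Jensen's and Markov's inequalities and
a union bound give `saw θ ≤ L * log n` at all vertices with high probability (`whp_saw`).

*Conclusion.* Conditioning the marginal on some spins of `U` leaves a hard-core model on a set of
vertices, and eigenvalues are bounded by absolute row sums of the influence matrix, so uniform
bounds on the influences of the vertices of `U` suffice (`spectrallyIndependent_of_infl`). A vertex of
degree at most `D` has influence at most `D * C * (L * log n) ^ γ`, which is `o(log n)` as `γ < 1`.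
-/

open Classical Filter

/-- The degree of a vertex. -/
noncomputable def deg {V : Type*} (G : SimpleGraph V) (v : V) : ℕ :=
  Nat.card {u : V // G.Adj v u}

/-- The number of edges of a graph. -/
noncomputable def edgeCount {V : Type*} (G : SimpleGraph V) : ℕ :=
  Nat.card G.edgeSet

/-- The probability that the Erdős–Rényi random graph `G(n,p)` satisfies property `P`:
each of the `n(n-1)/2` possible edges is present independently with probability `p`. -/
noncomputable def erProb (n : ℕ) (p : ℝ) (P : SimpleGraph (Fin n) → Prop) : ℝ :=
  ∑ G : SimpleGraph (Fin n),
    (if P G then p ^ edgeCount G * (1 - p) ^ (n.choose 2 - edgeCount G) else 0)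

/-- The probability of an event `A` under the (possibly unnormalised) distribution `μ`
on configurations `α → Bool`. -/
noncomputable def pr {α : Type*} [Fintype α] (μ : (α → Bool) → ℝ) (A : Set (α → Bool)) : ℝ :=
  ∑ σ : α → Bool, if σ ∈ A then μ σ else 0

/-- Conditional probability `μ(A | B)`. -/
noncomputable def cpr {α : Type*} [Fintype α] (μ : (α → Bool) → ℝ) (A B : Set (α → Bool)) : ℝ :=
  pr μ (A ∩ B) / pr μ B

/-- The event that the configuration agrees with `τ` on `S`. -/
def eventEq {α : Type*} (S : Set α) (τ : α → Bool) : Set (α → Bool) := {σ | ∀ v ∈ S, σ v = τ v}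

/-- The event that site `v` has spin `i`. -/
def eventVal {α : Type*} (v : α) (i : Bool) : Set (α → Bool) := {σ | σ v = i}

/-- The marginal of the distribution `μ` on the coordinates in `U`. -/
noncomputable def marginal {V : Type*} [Fintype V] (μ : (V → Bool) → ℝ) (U : Set V) :
    (↥U → Bool) → ℝ :=
  fun τ => ∑ σ : V → Bool, if ∀ u : ↥U, σ u.1 = τ u then μ σ else 0

/-- `μ` is `η`-spectrally independent: for every proper subset `S` of the sites and every
conditioning `τ` on `S` of positive probability, every (real) eigenvalue of the influence
matrix `Ψ_τ` (indexed by pairs `(v,i)` with `v ∉ S` and `μ_τ(σ_v = i) > 0`, with entries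
`μ_τ(σ_w = k | σ_v = i) - μ_τ(σ_w = k)` off the diagonal blocks `v = w`, and `0` there)
is at most `η`. -/
def SpectrallyIndependent {α : Type*} [Fintype α] (μ : (α → Bool) → ℝ) (η : ℝ) : Prop :=
  ∀ (S : Set α) (τ : α → Bool), S ≠ Set.univ → 0 < pr μ (eventEq S τ) →
    ∀ (t : ℝ)
      (x : {p : α × Bool // p.1 ∉ S ∧ 0 < cpr μ (eventVal p.1 p.2) (eventEq S τ)} → ℝ),
      x ≠ 0 →
      (Matrix.of fun p q :
          {p : α × Bool // p.1 ∉ S ∧ 0 < cpr μ (eventVal p.1 p.2) (eventEq S τ)} =>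
          if p.1.1 = q.1.1 then (0 : ℝ)
          else cpr μ (eventVal q.1.1 q.1.2) (eventEq S τ ∩ eventVal p.1.1 p.1.2)
               - cpr μ (eventVal q.1.1 q.1.2) (eventEq S τ)).mulVec x = t • x →
      t ≤ η

/-- A configuration `σ : V → Bool` is the indicator of an independent set of `G`. -/
def IsIndepConf {V : Type*} (G : SimpleGraph V) (σ : V → Bool) : Prop :=
  ∀ u v, G.Adj u v → ¬(σ u = true ∧ σ v = true)

/-- Weight `λ^{|σ|}` of an independent-set configuration (and `0` otherwise). -/
noncomputable def hcWeight {V : Type*} [Fintype V] (G : SimpleGraph V) (lam : ℝ)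
    (σ : V → Bool) : ℝ :=
  if IsIndepConf G σ then lam ^ (Finset.univ.filter (fun v => σ v = true)).card else 0

/-- The hard-core distribution `μ_{G,λ}` on configurations `V → Bool`. -/
noncomputable def hardCore {V : Type*} [Fintype V] (G : SimpleGraph V) (lam : ℝ) :
    (V → Bool) → ℝ :=
  fun σ => hcWeight G lam σ / ∑ σ' : V → Bool, hcWeight G lam σ'

/-- `λ_c(d) = d^d/(d-1)^{d+1}` (relevant for `d > 1`). -/
noncomputable def lamc (d : ℝ) : ℝ := d ^ d / (d - 1) ^ (d + 1)

set_option linter.unusedSectionVars false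

/-! ### Expectations over random subsets -/

/-- Expectation of `f X`, where the random set `X ⊆ F` contains each element of `F`
independently with probability `p`. -/
noncomputable def Ex {α : Type*} [DecidableEq α] (p : ℝ) (F : Finset α) (f : Finset α → ℝ) : ℝ :=
  ∑ X ∈ F.powerset, p ^ X.card * (1 - p) ^ (F.card - X.card) * f X

section Ex
variable {α : Type*} [DecidableEq α] {p : ℝ} {F : Finset α} {f g : Finset α → ℝ}

lemma Ex_empty (p : ℝ) (f : Finset α → ℝ) : Ex p ∅ f = f ∅ := by simp [Ex]

/-- Exposing a single element. -/
lemma Ex_insert (p : ℝ) (f : Finset α → ℝ) {e : α} (he : e ∉ F) :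
    Ex p (insert e F) f = p * Ex p F (fun X => f (insert e X)) + (1 - p) * Ex p F f := by
  unfold Ex
  rw [Finset.sum_powerset_insert he, add_comm, Finset.mul_sum, Finset.mul_sum]
  congr 1
  · refine Finset.sum_congr rfl fun X hX => ?_
    have h1 : e ∉ X := fun h => he (Finset.mem_powerset.1 hX h)
    rw [Finset.card_insert_of_notMem h1, Finset.card_insert_of_notMem he,
      Nat.add_sub_add_right]
    ring
  · refine Finset.sum_congr rfl fun X hX => ?_
    have h1 := Finset.card_le_card (Finset.mem_powerset.1 hX)
    rw [Finset.card_insert_of_notMem he, Nat.succ_sub h1, pow_succ]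
    ring

lemma Ex_congr (h : ∀ X ⊆ F, f X = g X) : Ex p F f = Ex p F g :=
  Finset.sum_congr rfl fun X hX => by rw [h X (Finset.mem_powerset.1 hX)]

lemma Ex_add : Ex p F (fun X => f X + g X) = Ex p F f + Ex p F g := by
  simp only [Ex, mul_add, Finset.sum_add_distrib]

lemma Ex_sub : Ex p F (fun X => f X - g X) = Ex p F f - Ex p F g := by
  simp only [Ex, mul_sub, Finset.sum_sub_distrib]

lemma Ex_smul (c : ℝ) : Ex p F (fun X => c * f X) = c * Ex p F f := by
  simp only [Ex, Finset.mul_sum]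
  exact Finset.sum_congr rfl fun X _ => by ring

lemma Ex_sum {ι : Type*} (s : Finset ι) (h : ι → Finset α → ℝ) :
    Ex p F (fun X => ∑ i ∈ s, h i X) = ∑ i ∈ s, Ex p F (h i) := by
  simp only [Ex, Finset.mul_sum]
  exact Finset.sum_comm

lemma Ex_mono (h0 : 0 ≤ p) (h1 : p ≤ 1) (h : ∀ X ⊆ F, f X ≤ g X) : Ex p F f ≤ Ex p F g :=
  Finset.sum_le_sum fun X hX => mul_le_mul_of_nonneg_left (h X (Finset.mem_powerset.1 hX))
    (mul_nonneg (pow_nonneg h0 _) (pow_nonneg (by linarith) _))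

lemma Ex_const (c : ℝ) : Ex p F (fun _ => c) = c := by
  induction F using Finset.induction_on with
  | empty => simp [Ex]
  | insert e F he ih => rw [Ex_insert _ _ he, ih]; ring

lemma Ex_nonneg (h0 : 0 ≤ p) (h1 : p ≤ 1) (h : ∀ X ⊆ F, 0 ≤ f X) : 0 ≤ Ex p F f := by
  have := Ex_mono (f := fun _ => 0) h0 h1 h
  rwa [Ex_const] at this

/-- Two-stage exposure: retaining each element of a `p`-random set with probability `θ` gives a
`pθ`-random set. -/
lemma Ex_Ex (p θ : ℝ) (F : Finset α) (f : Finset α → ℝ) :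
    Ex p F (fun X => Ex θ X f) = Ex (p * θ) F f := by
  induction F using Finset.induction_on generalizing f with
  | empty => simp [Ex_empty]
  | insert e F he ih =>
    rw [Ex_insert _ _ he, Ex_insert _ _ he, ← ih, ← ih]
    have : Ex p F (fun X => Ex θ (insert e X) f) =
        θ * Ex p F (fun X => Ex θ X (fun Y => f (insert e Y))) +
          (1 - θ) * Ex p F (fun X => Ex θ X f) := by
      rw [← Ex_smul, ← Ex_smul, ← Ex_add]
      exact Ex_congr fun X hX => Ex_insert _ _ fun h => he (hX h)
    rw [this]; ring

/-- Fubini for exposing two disjoint sets one after the other. -/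
lemma Ex_union {F' : Finset α} (h : Disjoint F F') (f : Finset α → ℝ) :
    Ex p (F ∪ F') f = Ex p F (fun X => Ex p F' (fun Y => f (X ∪ Y))) := by
  induction F using Finset.induction_on generalizing f with
  | empty => simp [Ex_empty]
  | insert e F he ih =>
    rw [Finset.disjoint_insert_left] at h
    have he' : e ∉ F ∪ F' := by simp [he, h.1]
    rw [Finset.insert_union, Ex_insert _ _ he', Ex_insert _ _ he, ih h.2, ih h.2]
    simp only [Finset.insert_union]

/-- The event `e ∈ X` is independent of any `g X` which does not depend on `e`. -/
lemma Ex_ind (e : α) (hg : ∀ X, g (insert e X) = g X) :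
    Ex p F (fun X => if e ∈ X then g X else 0) = if e ∈ F then p * Ex p F g else 0 := by
  split_ifs with h
  · obtain ⟨F', he, rfl⟩ : ∃ F', e ∉ F' ∧ F = insert e F' :=
      ⟨F.erase e, by simp, by simp [h]⟩
    rw [Ex_insert _ _ he, Ex_insert _ _ he]
    have h0 : Ex p F' (fun X => if e ∈ X then g X else 0) = 0 := by
      exact (Ex_congr (g := fun _ => 0) fun X hX => if_neg fun h => he (hX h)).trans (Ex_const 0)
    rw [h0]
    simp only [Finset.mem_insert_self, if_true, hg]
    ring
  · exact (Ex_congr (g := fun _ => 0) fun X hX => if_neg fun h' => h (hX h')).trans (Ex_const 0)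

/-- Independence: products over the random set have product expectation. -/
lemma Ex_prod (a : α → ℝ) :
    Ex p F (fun X => ∏ e ∈ X, a e) = ∏ e ∈ F, (1 + p * (a e - 1)) := by
  induction F using Finset.induction_on with
  | empty => simp [Ex]
  | insert e F he ih =>
    rw [Ex_insert _ _ he, Finset.prod_insert he, ← ih]
    have : Ex p F (fun X => ∏ e ∈ insert e X, a e) = a e * Ex p F (fun X => ∏ e ∈ X, a e) := by
      rw [← Ex_smul]
      exact Ex_congr fun X hX => Finset.prod_insert fun h => he (hX h)
    rw [this]; ring

/-- Moment generating function bound for the number of chosen elements in `B`. -/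
lemma Ex_exp_card (h0 : 0 ≤ p) {t : ℝ} (ht : 0 ≤ t) (B : Finset α) :
    Ex p F (fun X => Real.exp (t * (X ∩ B).card)) ≤ Real.exp (p * B.card * (Real.exp t - 1)) := by
  have hc : 0 ≤ p * (Real.exp t - 1) :=
    mul_nonneg h0 (by linarith [Real.add_one_le_exp t])
  have h2 : Ex p F (fun X => Real.exp (t * (X ∩ B).card)) =
      Ex p F (fun X => ∏ e ∈ X, if e ∈ B then Real.exp t else 1) := by
    refine Ex_congr fun X _ => ?_
    rw [Finset.prod_ite, Finset.prod_const_one, mul_one, Finset.prod_const,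
      Finset.filter_mem_eq_inter, ← Real.exp_nat_mul, mul_comm]
  rw [h2, Ex_prod]
  calc ∏ e ∈ F, (1 + p * ((if e ∈ B then Real.exp t else 1) - 1))
      ≤ ∏ e ∈ F, (if e ∈ B then Real.exp (p * (Real.exp t - 1)) else 1) := by
        refine Finset.prod_le_prod (fun e _ => ?_) (fun e _ => ?_)
        · split_ifs <;> [linarith; simp]
        · split_ifs
          · linarith [Real.add_one_le_exp (p * (Real.exp t - 1))]
          · simp
    _ = Real.exp ((F ∩ B).card * (p * (Real.exp t - 1))) := by
        rw [Finset.prod_ite, Finset.prod_const_one, mul_one, Finset.prod_const,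
          Finset.filter_mem_eq_inter, ← Real.exp_nat_mul]
    _ ≤ _ := by
        apply Real.exp_le_exp.2
        have : ((F ∩ B).card : ℝ) ≤ B.card := by
          exact_mod_cast Finset.card_le_card Finset.inter_subset_right
        nlinarith

/-- Jensen's inequality for the exponential. -/
lemma exp_Ex_le (h0 : 0 ≤ p) (h1 : p ≤ 1) : Real.exp (Ex p F f) ≤ Ex p F (fun X => Real.exp (f X)) := by
  set m := Ex p F f with hm
  -- The tangent of `exp` at the mean `m` has expectation `exp m`.
  have h : Ex p F (fun X => Real.exp m * (1 - m) + Real.exp m * f X) = Real.exp m := by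
    rw [Ex_add, Ex_const, Ex_smul, ← hm]; ring
  rw [← h]
  refine Ex_mono h0 h1 fun X _ => ?_
  have := Real.add_one_le_exp (f X - m)
  have h3 : Real.exp (f X) = Real.exp m * Real.exp (f X - m) := by rw [← Real.exp_add]; ring_nf
  rw [h3]
  nlinarith [Real.exp_pos m]

/-- Markov's inequality. -/
lemma Ex_markov (h0 : 0 ≤ p) (h1 : p ≤ 1) (hf : ∀ X ⊆ F, 0 ≤ f X) {c : ℝ} (hc : 0 < c) :
    Ex p F (fun X => if c < f X then 1 else 0) ≤ Ex p F f / c := by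
  have : Ex p F f / c = Ex p F (fun X => c⁻¹ * f X) := by rw [Ex_smul]; ring
  rw [this]
  refine Ex_mono h0 h1 fun X hX => ?_
  have := hf X hX
  split_ifs with h
  · rw [inv_mul_eq_div, le_div_iff₀ hc]; linarith
  · positivity

end Ex

/-! ### Self-avoiding walks and clusters -/

section Saw
variable {V : Type*} [DecidableEq V]

/-- Generating function `∑ θ ^ length` of the self-avoiding walks of length at most `k` which
start at `v` and afterwards stay in `S`, in the graph with edge set `X`. -/
noncomputable def saw (θ : ℝ) (X : Finset (Sym2 V)) : ℕ → Finset V → V → ℝ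
  | 0, _, _ => 1
  | k + 1, S, v => 1 + θ * ∑ u ∈ S.erase v, if s(v, u) ∈ X then saw θ X k (S.erase v) u else 0

/-- The cluster of `u` inside `S`: the vertices of `S` joined to `u` by a path of edges of `X` inside
`S`. It is empty if `u ∉ S`. -/
noncomputable def cl (X : Finset (Sym2 V)) (S : Finset V) (u : V) : Finset V :=
  S.filter fun w => Relation.ReflTransGen (fun a b => a ∈ S ∧ b ∈ S ∧ s(a, b) ∈ X) u w

/-- The union of the clusters of the vertices of `A` inside `S`. -/
noncomputable def clA (X : Finset (Sym2 V)) (S A : Finset V) : Finset V := A.biUnion (cl X S)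

lemma saw_one_le {θ : ℝ} (h0 : 0 ≤ θ) (X : Finset (Sym2 V)) (k : ℕ) (S : Finset V) (v : V) :
    1 ≤ saw θ X k S v := by
  induction k generalizing S v with
  | zero => simp [saw]
  | succ k ih =>
    rw [saw]
    have : 0 ≤ ∑ u ∈ S.erase v, if s(v, u) ∈ X then saw θ X k (S.erase v) u else 0 :=
      Finset.sum_nonneg fun u _ => by
        split_ifs
        · linarith [ih (S.erase v) u]
        · exact le_rfl
    nlinarith [mul_nonneg h0 this]

lemma saw_mono {θ : ℝ} (h0 : 0 ≤ θ) (X : Finset (Sym2 V)) (k : ℕ) {S T : Finset V} (h : S ⊆ T)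
    (v : V) : saw θ X k S v ≤ saw θ X k T v := by
  induction k generalizing S T v with
  | zero => simp [saw]
  | succ k ih =>
    rw [saw, saw]
    have h' := Finset.erase_subset_erase v h
    have : ∑ u ∈ S.erase v, (if s(v, u) ∈ X then saw θ X k (S.erase v) u else 0) ≤
        ∑ u ∈ T.erase v, (if s(v, u) ∈ X then saw θ X k (T.erase v) u else 0) := by
      refine (Finset.sum_le_sum fun u _ => ?_).trans
        (Finset.sum_le_sum_of_subset_of_nonneg h' fun u _ _ => ?_)
      · split_ifs
        · exact ih h' u
        · exact le_rfl
      · split_ifs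
        · linarith [saw_one_le h0 X k (T.erase v) u]
        · exact le_rfl
    nlinarith

/-- An edge at a vertex outside the region does not influence the walks. -/
lemma saw_insert (θ : ℝ) (X : Finset (Sym2 V)) (k : ℕ) {S : Finset V} {v w u : V}
    (hv : v ∉ S) (hu : u ≠ v) : saw θ (insert s(v, w) X) k S u = saw θ X k S u := by
  induction k generalizing S u with
  | zero => simp [saw]
  | succ k ih =>
    rw [saw, saw]
    congr 2
    refine Finset.sum_congr rfl fun x hx => ?_
    have hx' : x ≠ v := fun h => hv (h ▸ Finset.mem_of_mem_erase hx)
    have h1 : s(u, x) ∈ insert s(v, w) X ↔ s(u, x) ∈ X := by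
      rw [Finset.mem_insert, or_iff_right]
      intro h
      rw [Sym2.eq_iff] at h
      rcases h with h | h
      · exact hu h.1
      · exact hx' h.2
    simp only [h1]
    rw [ih (fun h => hv (Finset.mem_of_mem_erase h)) hx']

/-- The weighted count of self-avoiding walks is the expected number of self-avoiding walks
that survive `θ`-percolation. -/
lemma Ex_saw (θ : ℝ) (X : Finset (Sym2 V)) (k : ℕ) (S : Finset V) (v : V) :
    Ex θ X (fun Y => saw 1 Y k S v) = saw θ X k S v := by
  induction k generalizing S v with
  | zero => simp [saw, Ex_const]
  | succ k ih =>
    simp only [saw, one_mul]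
    rw [Ex_add, Ex_const, Ex_sum, Finset.mul_sum]
    congr 1
    refine Finset.sum_congr rfl fun u hu => ?_
    rw [Ex_ind _ fun Y => saw_insert _ _ _ (by simp) (Finset.ne_of_mem_erase hu), ih]
    split_ifs <;> simp

lemma cl_refl {X : Finset (Sym2 V)} {S : Finset V} {u : V} (hu : u ∈ S) : u ∈ cl X S u := by
  simp [cl, hu, Relation.ReflTransGen.refl]

lemma cl_subset (X : Finset (Sym2 V)) (S : Finset V) (u : V) : cl X S u ⊆ S :=
  Finset.filter_subset _ _

lemma cl_symm {X : Finset (Sym2 V)} {S : Finset V} {u w : V} (hu : u ∈ S) (h : w ∈ cl X S u) :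
    u ∈ cl X S w := by
  simp only [cl, Finset.mem_filter] at h ⊢
  refine ⟨hu, ?_⟩
  have hs : Std.Symm (fun a b => a ∈ S ∧ b ∈ S ∧ s(a, b) ∈ X) :=
    ⟨fun a b h => ⟨h.2.1, h.1, by rw [Sym2.eq_swap]; exact h.2.2⟩⟩
  exact (Relation.ReflTransGen.stdSymm).symm _ _ h.2

lemma cl_trans {X : Finset (Sym2 V)} {S : Finset V} {u w x : V} (h : w ∈ cl X S u)
    (h' : x ∈ cl X S w) : x ∈ cl X S u := by
  simp only [cl, Finset.mem_filter] at h h' ⊢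
  exact ⟨h'.1, h.2.trans h'.2⟩

lemma cl_mono (X : Finset (Sym2 V)) {S T : Finset V} (h : S ⊆ T) (u : V) :
    cl X S u ⊆ cl X T u := by
  intro w hw
  simp only [cl, Finset.mem_filter] at hw ⊢
  exact ⟨h hw.1, Relation.ReflTransGen.mono (fun a b hab => ⟨h hab.1, h hab.2.1, hab.2.2⟩) _ _ hw.2⟩

/-- An edge at a vertex outside the region does not influence the clusters. -/
lemma cl_insert (X : Finset (Sym2 V)) {S : Finset V} {v : V} (w u : V) (hv : v ∉ S) :
    cl (insert s(v, w) X) S u = cl X S u := by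
  have h : (fun a b => a ∈ S ∧ b ∈ S ∧ s(a, b) ∈ insert s(v, w) X) =
      fun a b => a ∈ S ∧ b ∈ S ∧ s(a, b) ∈ X := by
    funext x y
    refine propext (and_congr_right fun ha => and_congr_right fun hb => ?_)
    rw [Finset.mem_insert, or_iff_right]
    intro h
    rw [Sym2.eq_iff] at h
    rcases h with h | h
    · exact hv (h.1 ▸ ha)
    · exact hv (h.2 ▸ hb)
  simp only [cl, h]

/-- Minimality: the clusters of `A` lie in every set containing `A` and closed under adjacency
to vertices of `S`. -/
lemma clA_subset_of_closed {X : Finset (Sym2 V)} {S A T : Finset V} (hA : A ⊆ T)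
    (hT : ∀ a ∈ T, ∀ b ∈ S, s(a, b) ∈ X → b ∈ T) : clA X S A ⊆ T := by
  intro w hw
  simp only [clA, cl, Finset.mem_biUnion, Finset.mem_filter] at hw
  obtain ⟨a, ha, -, h⟩ := hw
  induction h with
  | refl => exact hA ha
  | tail _ h ih => exact hT _ ih _ h.2.1 h.2.2

/-- One exploration step: after `v` is processed, its neighbours become active and `v` is removed
from the region. -/
lemma clA_step (X : Finset (Sym2 V)) {S A : Finset V} {v : V} (hA : A ⊆ S) :
    clA X S (insert v A) ⊆ insert v
      (clA X (S.erase v) (A.erase v ∪ (S.erase v).filter fun u => s(v, u) ∈ X)) := by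
  apply clA_subset_of_closed
  · intro a ha
    by_cases hav : a = v
    · simp [hav]
    · have haA : a ∈ A := by simpa [hav] using ha
      refine Finset.mem_insert_of_mem (Finset.mem_biUnion.2 ⟨a, ?_, cl_refl ?_⟩)
      · simp [hav, haA]
      · simp [hav, hA haA]
  · intro a ha b hb hab
    by_cases hbv : b = v
    · simp [hbv]
    refine Finset.mem_insert_of_mem ?_
    have hb' : b ∈ S.erase v := by simp [hbv, hb]
    rcases Finset.mem_insert.1 ha with rfl | ha
    · exact Finset.mem_biUnion.2 ⟨b, by simp [hbv, hb, hab], cl_refl hb'⟩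
    · obtain ⟨x, hx, hax⟩ := Finset.mem_biUnion.1 ha
      refine Finset.mem_biUnion.2 ⟨x, hx, cl_trans hax ?_⟩
      simp only [cl, Finset.mem_filter]
      exact ⟨hb', Relation.ReflTransGen.single ⟨cl_subset _ _ _ hax, hb', hab⟩⟩

lemma clA_singleton (X : Finset (Sym2 V)) (S : Finset V) (v : V) : clA X S {v} = cl X S v := by
  simp [clA]

lemma cl_step_subset (X : Finset (Sym2 V)) (S : Finset V) (v : V) :
    cl X S v ⊆ insert v
      (((S.erase v).filter fun u => s(v, u) ∈ X).biUnion (cl X (S.erase v))) := by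
  have := clA_step X (S := S) (A := ∅) (v := v) (by simp)
  simpa [clA] using this

lemma cl_step_superset (X : Finset (Sym2 V)) {S : Finset V} {v : V} (hv : v ∈ S) :
    insert v (((S.erase v).filter fun u => s(v, u) ∈ X).biUnion (cl X (S.erase v))) ⊆
      cl X S v := by
  intro w hw
  rcases Finset.mem_insert.1 hw with rfl | hw
  · exact cl_refl hv
  · obtain ⟨u, hu, huw⟩ := Finset.mem_biUnion.1 hw
    simp only [Finset.mem_filter, Finset.mem_erase] at hu
    refine cl_trans ?_ (cl_mono X (Finset.erase_subset v S) u huw)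
    simp only [cl, Finset.mem_filter]
    exact ⟨hu.1.2, Relation.ReflTransGen.single ⟨hv, hu.1.2, hu.2⟩⟩

/-- Every vertex of a cluster is the endpoint of a self-avoiding walk. -/
lemma card_cl_le_saw (X : Finset (Sym2 V)) (k : ℕ) {S : Finset V} {v : V}
    (hS : S.card ≤ k) : ((cl X S v).card : ℝ) ≤ saw 1 X k S v := by
  induction k generalizing S v with
  | zero =>
    have : S = ∅ := by simpa using hS
    simp [this, cl, saw]
  | succ k ih =>
    by_cases hv : v ∈ S
    · rw [saw, one_mul, ← Finset.sum_filter]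
      have h1 := Finset.card_le_card (cl_step_subset X S v)
      have h2 := h1.trans (Finset.card_insert_le _ _)
      have h3 := h2.trans (Nat.add_le_add_right Finset.card_biUnion_le 1)
      have h4 : ((cl X S v).card : ℝ) ≤
          (∑ u ∈ (S.erase v).filter fun u => s(v, u) ∈ X, ((cl X (S.erase v) u).card : ℝ)) + 1 := by
        exact_mod_cast h3
      have h5 := Finset.sum_le_sum
        (s := (S.erase v).filter fun u => s(v, u) ∈ X) fun u _ => ih (S := S.erase v) (v := u)
        (by rw [Finset.card_erase_of_mem hv]; omega)
      linarith
    · have : cl X S v = ∅ := by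
        rw [Finset.eq_empty_iff_forall_notMem]
        intro w hw
        have := hw
        simp only [cl, Finset.mem_filter] at this
        obtain ⟨hw, h⟩ := this
        rcases Relation.ReflTransGen.cases_head h with rfl | ⟨c, h, -⟩
        · exact hv hw
        · exact hv h.1
      rw [this]
      simpa using le_trans zero_le_one (saw_one_le zero_le_one X (k + 1) S v)

/-- Bonferroni's second inequality, with each pair counted twice. -/
lemma card_biUnion_bonferroni {ι : Type*} [DecidableEq ι] (B : Finset ι) (f : ι → Finset V) :
    ∑ i ∈ B, ((f i).card : ℝ) ≤
      (B.biUnion f).card + ∑ i ∈ B, ∑ j ∈ B.erase i, (((f i) ∩ (f j)).card : ℝ) := by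
  induction B using Finset.induction_on with
  | empty => simp
  | insert a B ha ih =>
    rw [Finset.sum_insert ha, Finset.sum_insert ha, Finset.biUnion_insert,
      Finset.erase_insert ha]
    have h1 : ((f a ∪ B.biUnion f).card : ℝ) + (f a ∩ B.biUnion f).card =
        (f a).card + (B.biUnion f).card := by
      exact_mod_cast Finset.card_union_add_card_inter _ _
    have h2 : ((f a ∩ B.biUnion f).card : ℝ) ≤ ∑ j ∈ B, ((f a ∩ f j).card : ℝ) := by
      rw [Finset.inter_biUnion]
      exact_mod_cast Finset.card_biUnion_le
    have h3 : ∑ i ∈ B, ∑ j ∈ B.erase i, (((f i) ∩ (f j)).card : ℝ) ≤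
        ∑ i ∈ B, ∑ j ∈ (insert a B).erase i, (((f i) ∩ (f j)).card : ℝ) :=
      Finset.sum_le_sum fun i _ => Finset.sum_le_sum_of_subset_of_nonneg
        (Finset.erase_subset_erase i (Finset.subset_insert a B)) fun _ _ _ => by positivity
    linarith

/-- A cluster which meets that of `u` coincides with it, so it is met by the clusters of exactly its
own vertices. -/
lemma sum_card_inter_cl (X : Finset (Sym2 V)) {S : Finset V} (u : V) :
    ∑ j ∈ S, ((cl X S u ∩ cl X S j).card : ℝ) ≤ ((cl X S u).card : ℝ) ^ 2 := by
  have h : ∀ j ∈ S, ((cl X S u ∩ cl X S j).card : ℝ) ≤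
      if j ∈ cl X S u then ((cl X S u).card : ℝ) else 0 := by
    intro j hj
    split_ifs with hju
    · exact_mod_cast Finset.card_le_card Finset.inter_subset_left
    · have : cl X S u ∩ cl X S j = ∅ := by
        rw [Finset.eq_empty_iff_forall_notMem]
        intro w hw
        rw [Finset.mem_inter] at hw
        exact hju (cl_trans hw.1 (cl_symm hj hw.2))
      simp [this]
  refine (Finset.sum_le_sum h).trans ?_
  rw [← Finset.sum_filter, Finset.sum_const, nsmul_eq_mul, sq]
  gcongr
  intro j hj
  exact (Finset.mem_filter.1 hj).2

end Saw

/-! ### Subcritical clusters -/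

section Sub
variable {V : Type*} [DecidableEq V]

/-- Edges at `v` do not influence clusters inside a region that avoids `v`. -/
lemma clA_union {X Y : Finset (Sym2 V)} {S A : Finset V} {v : V} (hv : v ∉ S)
    (hY : ∀ e ∈ Y, v ∈ e) : clA (Y ∪ X) S A = clA X S A := by
  induction Y using Finset.induction_on with
  | empty => simp
  | insert e Y he ih =>
    obtain ⟨w, rfl⟩ := hY e (by simp)
    rw [Finset.insert_union, ← ih fun e he => hY e (by simp [he])]
    unfold clA
    exact Finset.biUnion_congr rfl fun u _ => cl_insert _ _ _ hv

/-- Exponential moments of subcritical clusters, by exploring one vertex at a time: the condition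
`s + q * (exp t - 1) ≤ t` makes `exp (s * explored + t * active)` a supermartingale. -/
lemma Ex_exp_clA {p q s t : ℝ} (h0 : 0 ≤ p) (h1 : p ≤ 1) (hs : 0 ≤ s) (ht : 0 ≤ t)
    (hst : s + q * (Real.exp t - 1) ≤ t) (S : Finset V) (hS : p * S.card ≤ q)
    (F : Finset (Sym2 V)) (A : Finset V) (hA : A ⊆ S) :
    Ex p F (fun X => Real.exp (s * (clA X S A).card)) ≤ Real.exp (t * A.card) := by
  induction S using Finset.strongInduction generalizing F A with
  | H S ih =>
  rcases A.eq_empty_or_nonempty with rfl | ⟨v, hvA⟩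
  · simp [clA, Ex_const]
  have hvS := hA hvA
  set A0 := A.erase v with hA0
  have hAc : (A.card : ℝ) = A0.card + 1 := by
    rw [hA0, ← Finset.card_erase_add_one hvA]; push_cast; ring
  -- The edges `F1` at `v` are exposed first; the remaining ones stay independent of them.
  set F1 := F.filter fun e => v ∈ e with hF1
  set F2 := F.filter fun e => ¬ v ∈ e with hF2
  have hF : F = F1 ∪ F2 := (Finset.filter_union_filter_not_eq _ _).symm
  have hd : Disjoint F1 F2 := Finset.disjoint_filter_filter_not _ _ _
  rw [hF, Ex_union hd]
  have hss : S.erase v ⊂ S := Finset.erase_ssubset hvS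
  have hcS : ((S.erase v).card : ℝ) ≤ S.card := by
    exact_mod_cast Finset.card_le_card hss.1
  set B : Finset (Sym2 V) := (S.erase v).image fun u => s(v, u) with hB
  have inner : ∀ Y ⊆ F1, Ex p F2 (fun Z => Real.exp (s * (clA (Y ∪ Z) S A).card)) ≤
      Real.exp (s + t * A0.card) * Real.exp (t * (Y ∩ B).card) := by
    intro Y hY
    set N := (S.erase v).filter fun u => s(v, u) ∈ Y with hN
    have hNc : N.card ≤ (Y ∩ B).card := by
      refine Finset.card_le_card_of_injOn (fun u => s(v, u)) ?_ ?_
      · intro u hu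
        simp only [hN, Finset.coe_filter, Set.mem_ofPred_eq] at hu
        simp only [Finset.coe_inter, Set.mem_inter_iff, Finset.mem_coe]
        exact ⟨hu.2, Finset.mem_image_of_mem _ hu.1⟩
      · intro u _ u' _ h
        exact Sym2.congr_right.1 h
    have hsub : A0 ∪ N ⊆ S.erase v :=
      Finset.union_subset (Finset.erase_subset_erase v hA) (Finset.filter_subset _ _)
    have hstep : ∀ Z ⊆ F2, ((clA (Y ∪ Z) S A).card : ℝ) ≤
        1 + (clA Z (S.erase v) (A0 ∪ N)).card := by
      intro Z hZ
      have h := clA_step (Y ∪ Z) (S := S) (A := A0) (v := v)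
        ((Finset.erase_subset v A).trans hA)
      have hN' : (S.erase v).filter (fun u => s(v, u) ∈ Y ∪ Z) = N := by
        refine Finset.filter_congr fun u _ => ?_
        rw [Finset.mem_union, or_iff_left]
        intro hz
        have := hZ hz
        simp [hF2] at this
      have hA0' : A0.erase v = A0 := Finset.erase_eq_of_notMem (by simp [hA0])
      rw [hN', hA0', hA0, Finset.insert_erase hvA, clA_union (S := S.erase v) (by simp)
        (fun e he => (Finset.mem_filter.1 (hY he)).2)] at h
      have := (Finset.card_le_card h).trans (Finset.card_insert_le _ _)
      rw [add_comm]
      exact_mod_cast this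
    calc Ex p F2 (fun Z => Real.exp (s * (clA (Y ∪ Z) S A).card))
        ≤ Ex p F2 (fun Z => Real.exp s *
            Real.exp (s * (clA Z (S.erase v) (A0 ∪ N)).card)) := by
          refine Ex_mono h0 h1 fun Z hZ => ?_
          rw [← Real.exp_add]
          apply Real.exp_le_exp.2
          nlinarith [hstep Z hZ]
      _ ≤ Real.exp s * Real.exp (t * (A0 ∪ N).card) := by
          rw [Ex_smul]
          refine mul_le_mul_of_nonneg_left ?_ (Real.exp_pos _).le
          exact ih _ hss (by nlinarith) _ _ hsub
      _ ≤ _ := by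
          rw [← Real.exp_add, ← Real.exp_add]
          apply Real.exp_le_exp.2
          have h3 : ((A0 ∪ N).card : ℝ) ≤ A0.card + (Y ∩ B).card := by
            exact_mod_cast (Finset.card_union_le _ _).trans (Nat.add_le_add_left hNc _)
          nlinarith
  refine (Ex_mono h0 h1 inner).trans ?_
  rw [Ex_smul]
  refine (mul_le_mul_of_nonneg_left (Ex_exp_card h0 ht B) (Real.exp_pos _).le).trans ?_
  rw [← Real.exp_add]
  apply Real.exp_le_exp.2
  have hBc : (B.card : ℝ) ≤ S.card := by
    refine le_trans ?_ hcS
    exact_mod_cast Finset.card_image_le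
  have he : 0 ≤ Real.exp t - 1 := by linarith [Real.add_one_le_exp t]
  have h5 : p * B.card * (Real.exp t - 1) ≤ q * (Real.exp t - 1) :=
    mul_le_mul_of_nonneg_right (by nlinarith) he
  rw [hAc]
  linarith

/-- The second moment of a subcritical cluster, bounded by an exponential moment. -/
lemma Ex_cl_sq {p q s t : ℝ} (h0 : 0 ≤ p) (h1 : p ≤ 1) (hs : 0 < s) (ht : 0 ≤ t)
    (hst : s + q * (Real.exp t - 1) ≤ t) (S : Finset V) (hS : p * S.card ≤ q)
    (F : Finset (Sym2 V)) {u : V} (hu : u ∈ S) :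
    Ex p F (fun X => ((cl X S u).card : ℝ) ^ 2) ≤ 2 / s ^ 2 * Real.exp t := by
  have h := Ex_exp_clA h0 h1 hs.le ht hst S hS F {u} (by simpa using hu)
  simp only [clA_singleton, Finset.card_singleton, Nat.cast_one, mul_one] at h
  refine le_trans ?_ (mul_le_mul_of_nonneg_left h (by positivity))
  rw [← Ex_smul]
  refine Ex_mono h0 h1 fun X _ => ?_
  have h2 := Real.quadratic_le_exp_of_nonneg (x := s * (cl X S u).card) (by positivity)
  have h3 : (s * (cl X S u).card) ^ 2 / 2 ≤ Real.exp (s * (cl X S u).card) := by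
    have : 0 ≤ s * ((cl X S u).card : ℝ) := by positivity
    linarith
  rw [div_mul_eq_mul_div, le_div_iff₀ (by positivity)]
  linarith

/-- In the subcritical regime the expected number of self-avoiding walks exceeds the expected
cluster size only by `O(p)`: a walk is in excess only if two neighbours of some vertex are joined
avoiding this vertex, which costs one extra edge. -/
lemma Ex_saw_sub_cl {p q K : ℝ} (h0 : 0 ≤ p) (h1 : p ≤ 1) (hq : q < 1) (hK : 0 ≤ K)
    {F : Finset (Sym2 V)} (k : ℕ)
    (S : Finset V) (hF : ∀ u ∈ S, ∀ v ∈ S, u ≠ v → s(u, v) ∈ F) (hS : p * S.card ≤ q)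
    (hsq : ∀ T ⊆ S, ∀ u ∈ T, Ex p F (fun X => ((cl X T u).card : ℝ) ^ 2) ≤ K)
    {v : V} (hv : v ∈ S) :
    Ex p F (fun X => saw 1 X k S v - (cl X S v).card) ≤ p * q * K / (1 - q) := by
  have hq0 : 0 ≤ q := le_trans (by positivity) hS
  have hB : 0 ≤ p * q * K / (1 - q) := div_nonneg (by positivity) (by linarith)
  induction k generalizing S v with
  | zero =>
    refine le_trans (Ex_mono (g := fun _ => 0) h0 h1 fun X _ => ?_) (by rwa [Ex_const])
    have : 1 ≤ (cl X S v).card := Finset.card_pos.2 ⟨v, cl_refl hv⟩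
    have : (1 : ℝ) ≤ (cl X S v).card := by exact_mod_cast this
    simp only [saw]; linarith
  | succ k ih =>
    set S' := S.erase v with hS'
    have hS'S : S' ⊆ S := Finset.erase_subset _ _
    have hc : (S'.card : ℝ) ≤ S.card := by exact_mod_cast Finset.card_le_card hS'S
    have hpc : p * S'.card ≤ q := le_trans (mul_le_mul_of_nonneg_left hc h0) hS
    -- The cluster of `v` consists of `v` and the clusters of its neighbours inside `S.erase v`, and
    -- Bonferroni bounds what is lost by their overlaps.
    have hpt : ∀ X ⊆ F, saw 1 X (k + 1) S v - (cl X S v).card ≤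
        (∑ u ∈ S', if s(v, u) ∈ X then saw 1 X k S' u - (cl X S' u).card else 0) +
        ∑ u ∈ S', ∑ j ∈ S'.erase u, if s(v, u) ∈ X then
          (if s(v, j) ∈ X then ((cl X S' u ∩ cl X S' j).card : ℝ) else 0) else 0 := by
      intro X _
      have h2 := Finset.card_le_card (cl_step_superset X hv)
      rw [Finset.card_insert_of_notMem (fun h => by
        obtain ⟨u, -, hu⟩ := Finset.mem_biUnion.1 h
        simpa using cl_subset _ _ _ hu)] at h2
      have h3 := card_biUnion_bonferroni (S'.filter fun u => s(v, u) ∈ X) (cl X S')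
      have h4 : ((((S'.filter fun u => s(v, u) ∈ X).biUnion (cl X S')).card : ℝ)) + 1 ≤
          (cl X S v).card := by exact_mod_cast h2
      have h5 : ∑ i ∈ S'.filter (fun u => s(v, u) ∈ X),
          ∑ j ∈ (S'.filter fun u => s(v, u) ∈ X).erase i, ((cl X S' i ∩ cl X S' j).card : ℝ) =
          ∑ u ∈ S', ∑ j ∈ S'.erase u, if s(v, u) ∈ X then
          (if s(v, j) ∈ X then ((cl X S' u ∩ cl X S' j).card : ℝ) else 0) else 0 := by
        rw [Finset.sum_filter]
        refine Finset.sum_congr rfl fun u _ => ?_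
        split_ifs with hu
        · rw [← Finset.filter_erase, Finset.sum_filter]
        · simp
      rw [h5] at h3
      rw [Finset.sum_filter] at h3
      rw [saw, one_mul]
      have h6 : (∑ u ∈ S', if s(v, u) ∈ X then saw 1 X k S' u - (cl X S' u).card else 0) =
          (∑ u ∈ S', if s(v, u) ∈ X then saw 1 X k S' u else 0) -
          ∑ u ∈ S', if s(v, u) ∈ X then ((cl X S' u).card : ℝ) else 0 := by
        rw [← Finset.sum_sub_distrib]
        refine Finset.sum_congr rfl fun u _ => ?_
        split_ifs <;> simp
      rw [h6]
      linarith
    refine (Ex_mono h0 h1 hpt).trans ?_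
    rw [Ex_add, Ex_sum, Ex_sum]
    have hvS' : v ∉ S' := by simp [hS']
    have hne : ∀ u ∈ S', u ≠ v := fun u hu => Finset.ne_of_mem_erase hu
    have e1 : ∀ u ∈ S', Ex p F (fun X => if s(v, u) ∈ X then
        saw 1 X k S' u - (cl X S' u).card else 0) ≤ p * (p * q * K / (1 - q)) := by
      intro u hu
      rw [Ex_ind _ fun X => by rw [saw_insert _ _ _ hvS' (hne u hu), cl_insert _ _ _ hvS'],
        if_pos (hF v hv u (hS'S hu) (hne u hu).symm)]
      exact mul_le_mul_of_nonneg_left (ih S' (fun u hu w hw => hF u (hS'S hu) w (hS'S hw)) hpc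
        (fun T hT => hsq T (hT.trans hS'S)) hu) h0
    have e2 : ∀ u ∈ S', Ex p F (fun X => ∑ j ∈ S'.erase u, if s(v, u) ∈ X then
          (if s(v, j) ∈ X then ((cl X S' u ∩ cl X S' j).card : ℝ) else 0) else 0) ≤
          p * (p * K) := by
      intro u hu
      have e3 : ∀ j ∈ S'.erase u, Ex p F (fun X => if s(v, u) ∈ X then
          (if s(v, j) ∈ X then ((cl X S' u ∩ cl X S' j).card : ℝ) else 0) else 0) =
          p * (p * Ex p F (fun X => ((cl X S' u ∩ cl X S' j).card : ℝ))) := by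
        intro j hj
        have hjS := Finset.mem_of_mem_erase hj
        rw [Ex_ind, if_pos (hF v hv u (hS'S hu) (hne u hu).symm), Ex_ind,
          if_pos (hF v hv j (hS'S hjS) (hne j hjS).symm)]
        · intro X
          rw [cl_insert _ _ _ hvS', cl_insert _ _ _ hvS']
        · intro X
          have : s(v, j) ≠ s(v, u) := by
            exact fun h => Finset.ne_of_mem_erase hj (Sym2.congr_right.1 h)
          rw [cl_insert _ _ _ hvS', cl_insert _ _ _ hvS']
          simp [this]
      rw [Ex_sum, Finset.sum_congr rfl e3, ← Finset.mul_sum, ← Finset.mul_sum, ← Ex_sum]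
      gcongr
      refine le_trans (Ex_mono h0 h1 fun X _ => ?_) (hsq S' hS'S u hu)
      refine le_trans ?_ (sum_card_inter_cl X u)
      exact Finset.sum_le_sum_of_subset_of_nonneg (Finset.erase_subset _ _)
        fun _ _ _ => by positivity
    have f1 := Finset.sum_le_sum e1
    have f2 := Finset.sum_le_sum e2
    rw [Finset.sum_const, nsmul_eq_mul] at f1 f2
    have g1 : (S'.card : ℝ) * (p * (p * q * K / (1 - q))) ≤ q * (p * q * K / (1 - q)) := by
      rw [← mul_assoc, mul_comm (S'.card : ℝ)]
      exact mul_le_mul_of_nonneg_right hpc hB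
    have g2 : (S'.card : ℝ) * (p * (p * K)) ≤ q * (p * K) := by
      rw [← mul_assoc, mul_comm (S'.card : ℝ)]
      exact mul_le_mul_of_nonneg_right hpc (by positivity)
    have g3 : q * (p * q * K / (1 - q)) + q * (p * K) = p * q * K / (1 - q) := by
      have : (1 - q) ≠ 0 := by linarith
      field_simp
      ring
    linarith

end Sub

/-! ### Walks in the Erdős–Rényi graph -/

/-- The edge set of a graph on `Fin n`, as a finset. -/
noncomputable def edges {n : ℕ} (G : SimpleGraph (Fin n)) : Finset (Sym2 (Fin n)) :=
  Finset.univ.filter fun e => e ∈ G.edgeSet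

lemma mem_edges {n : ℕ} (G : SimpleGraph (Fin n)) (u v : Fin n) :
    s(u, v) ∈ edges G ↔ G.Adj u v := by simp [edges]

lemma card_edges {n : ℕ} (G : SimpleGraph (Fin n)) : (edges G).card = edgeCount G := by
  rw [edgeCount, Nat.card_eq_fintype_card, Fintype.card_subtype, edges]

lemma card_edges_top (n : ℕ) : (edges (⊤ : SimpleGraph (Fin n))).card = n.choose 2 := by
  have h := SimpleGraph.card_edgeFinset_top_eq_card_choose_two (V := Fin n)
  rw [Fintype.card_fin] at h
  rw [← h]
  congr 1
  ext e
  simp [edges]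

/-- The Erdős–Rényi graph as a random subset of the edges of the complete graph. -/
lemma erProb_eq_Ex (n : ℕ) (p : ℝ) (Q : Finset (Sym2 (Fin n)) → Prop) :
    erProb n p (fun G => Q (edges G)) =
      Ex p (edges (⊤ : SimpleGraph (Fin n))) (fun X => if Q X then 1 else 0) := by
  unfold erProb Ex
  refine Finset.sum_bij' (fun G _ => edges G) (fun X _ => SimpleGraph.fromEdgeSet (X : Set _))
    ?_ ?_ ?_ ?_ ?_
  · intro G _
    rw [Finset.mem_powerset]
    intro e
    induction e with
    | h u v =>
      rw [mem_edges, mem_edges]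
      exact fun h => h.ne
  · simp
  · intro G _
    ext u v
    rw [SimpleGraph.fromEdgeSet_adj, Finset.mem_coe, mem_edges]
    exact ⟨fun h => h.1, fun h => ⟨h, h.ne⟩⟩
  · intro X hX
    rw [Finset.mem_powerset] at hX
    ext e
    induction e with
    | h u v =>
      rw [mem_edges, SimpleGraph.fromEdgeSet_adj, Finset.mem_coe]
      exact ⟨fun h => h.1, fun h => ⟨h, (mem_edges _ _ _).1 (hX h)⟩⟩
  · intro G _
    rw [card_edges_top, card_edges]
    by_cases h : Q (edges G) <;> simp [h]

lemma erProb_mono {n : ℕ} {p : ℝ} (h0 : 0 ≤ p) (h1 : p ≤ 1) {P Q : SimpleGraph (Fin n) → Prop}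
    (h : ∀ G, P G → Q G) : erProb n p P ≤ erProb n p Q := by
  refine Finset.sum_le_sum fun G _ => ?_
  have : 0 ≤ p ^ edgeCount G * (1 - p) ^ (n.choose 2 - edgeCount G) :=
    mul_nonneg (pow_nonneg h0 _) (pow_nonneg (by linarith) _)
  by_cases hP : P G
  · simp [hP, h G hP]
  · simp only [hP, if_false]
    split_ifs
    · exact this
    · exact le_rfl

lemma erProb_le_one {n : ℕ} {p : ℝ} (h0 : 0 ≤ p) (h1 : p ≤ 1) (P : SimpleGraph (Fin n) → Prop) :
    erProb n p P ≤ 1 := by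
  refine (erProb_mono h0 h1 (Q := fun _ => True) fun _ _ => trivial).trans ?_
  rw [erProb_eq_Ex n p fun _ => True]
  simp [Ex_const]

/-- The probability that the weighted number of self-avoiding walks from `v` is large. The mean
over the percolation of the cluster size has exponential moments by Jensen, while the excess is controlled
by Markov's inequality. -/
lemma saw_tail {n : ℕ} {p θ q s t : ℝ} (hn : 1 < n) (hp0 : 0 ≤ p) (hp1 : p ≤ 1) (hθ0 : 0 ≤ θ)
    (hθ1 : θ ≤ 1) (hq : q < 1) (hpq : p * θ * n ≤ q) (hs : 0 < s) (ht : 0 ≤ t)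
    (hst : s + q * (Real.exp t - 1) ≤ t) (v : Fin n) :
    Ex p (edges (⊤ : SimpleGraph (Fin n))) (fun X =>
      if (2 / s + 1) * Real.log n < saw θ X n Finset.univ v then 1 else 0) ≤
    Real.exp t / (n : ℝ) ^ 2 +
      (p * θ * q * (2 / s ^ 2 * Real.exp t) / (1 - q)) / Real.log n := by
  set F := edges (⊤ : SimpleGraph (Fin n))
  have hn' : (0 : ℝ) < n := by positivity
  have hlog : 0 < Real.log n := Real.log_pos (by exact_mod_cast hn)
  have h0 : 0 ≤ p * θ := mul_nonneg hp0 hθ0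
  have h1 : p * θ ≤ 1 := by nlinarith
  have hcard : p * θ * (Finset.univ : Finset (Fin n)).card ≤ q := by simpa using hpq
  set c : Finset (Sym2 (Fin n)) → ℝ := fun X => ((cl X Finset.univ v).card : ℝ) with hc
  set N : Finset (Sym2 (Fin n)) → ℝ := fun X => saw 1 X n Finset.univ v with hN
  have hNc : ∀ X, 0 ≤ N X - c X := fun X => by
    have := card_cl_le_saw X n (S := Finset.univ) (v := v) (by simp)
    simp only [hN, hc]; linarith
  have hsplit : ∀ X, saw θ X n Finset.univ v = Ex θ X c + Ex θ X (fun Y => N Y - c Y) := by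
    intro X
    rw [← Ex_saw, Ex_sub]; ring
  -- If the total exceeds `(2 / s + 1) * log n`, then the cluster part exceeds `2 / s * log n`, which
  -- costs `1 / n ^ 2` and so survives the union bound over `v`, or the excess exceeds `log n`.
  have hpt : ∀ X ⊆ F, (if (2 / s + 1) * Real.log n < saw θ X n Finset.univ v then (1 : ℝ) else 0) ≤
      (if (n : ℝ) ^ 2 < Real.exp (s * Ex θ X c) then 1 else 0) +
      (if Real.log n < Ex θ X (fun Y => N Y - c Y) then 1 else 0) := by
    intro X _
    by_cases ha : Real.log n < Ex θ X (fun Y => N Y - c Y)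
    · have : (0 : ℝ) ≤ if (n : ℝ) ^ 2 < Real.exp (s * Ex θ X c) then 1 else 0 := by
        split_ifs <;> norm_num
      rw [if_pos ha]
      split_ifs <;> linarith
    by_cases hb : (n : ℝ) ^ 2 < Real.exp (s * Ex θ X c)
    · rw [if_pos hb, if_neg ha]
      split_ifs <;> norm_num
    rw [if_neg ha, if_neg hb, if_neg]
    · norm_num
    rw [hsplit, not_lt, add_mul, one_mul]
    refine add_le_add ?_ (not_lt.1 ha)
    have := Real.log_le_log (Real.exp_pos _) (not_lt.1 hb)
    rw [Real.log_exp, Real.log_pow] at this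
    rw [div_mul_eq_mul_div, le_div_iff₀ hs]
    push_cast at this
    linarith
  refine (Ex_mono hp0 hp1 hpt).trans ?_
  rw [Ex_add]
  refine add_le_add ?_ ?_
  · refine (Ex_markov hp0 hp1 (fun X _ => (Real.exp_pos _).le) (by positivity)).trans ?_
    refine div_le_div_of_nonneg_right ?_ (by positivity)
    calc Ex p F (fun X => Real.exp (s * Ex θ X c))
        ≤ Ex p F (fun X => Ex θ X (fun Y => Real.exp (s * c Y))) := by
          refine Ex_mono hp0 hp1 fun X _ => ?_
          rw [← Ex_smul]
          exact exp_Ex_le hθ0 hθ1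
      _ = Ex (p * θ) F (fun Y => Real.exp (s * c Y)) := Ex_Ex _ _ _ _
      _ ≤ Real.exp t := by
          have := Ex_exp_clA h0 h1 hs.le ht hst Finset.univ hcard F {v} (by simp)
          simpa [clA_singleton] using this
  · refine (Ex_markov hp0 hp1 (fun X _ => Ex_nonneg hθ0 hθ1 fun Y _ => hNc Y) hlog).trans ?_
    refine div_le_div_of_nonneg_right ?_ hlog.le
    rw [Ex_Ex]
    refine Ex_saw_sub_cl h0 h1 hq (by positivity) n Finset.univ ?_ hcard ?_ (Finset.mem_univ v)
    · intro u _ w _ huw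
      exact (mem_edges _ _ _).2 huw
    · intro T _ u hu
      refine Ex_cl_sq h0 h1 hs ht hst T (le_trans ?_ hcard) F hu
      gcongr

/-- Parameters for the supermartingale condition in `Ex_exp_clA`: as `t` tends to `0`, the right side
exceeds `q * (exp t - 1)` by about `(1 - q) * t`. -/
lemma exists_exp_param {q : ℝ} (h0 : 0 ≤ q) (h1 : q < 1) :
    ∃ s t : ℝ, 0 < s ∧ 0 ≤ t ∧ s + q * (Real.exp t - 1) ≤ t := by
  set t := (1 - q) / 2 with ht
  have ht0 : 0 < t := by linarith
  have ht1 : t ≤ 1 := by linarith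
  have h := Real.abs_exp_sub_one_sub_id_le (x := t) (by rw [abs_of_pos ht0]; exact ht1)
  have h2 := (abs_le.1 h).2
  refine ⟨t ^ 2, t, by positivity, ht0.le, ?_⟩
  have h3 : q * (Real.exp t - 1) ≤ q * (t + t ^ 2) := mul_le_mul_of_nonneg_left (by linarith) h0
  have hq : q = 1 - 2 * t := by linarith
  rw [hq] at h3 ⊢
  nlinarith [pow_pos ht0 3]

/-- With high probability all weighted counts of self-avoiding walks are `O(log n)`. -/
lemma whp_saw {d θ : ℝ} (hd : 0 < d) (hθ0 : 0 ≤ θ) (hθ1 : θ ≤ 1) (hq : d * θ < 1) :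
    ∃ L : ℝ, 0 < L ∧ Tendsto (fun n : ℕ => erProb n (d / n) (fun G =>
      ∀ v, saw θ (edges G) n Finset.univ v ≤ L * Real.log n)) atTop (nhds 1) := by
  obtain ⟨s, t, hs, ht, hst⟩ := exists_exp_param (q := d * θ) (by positivity) hq
  refine ⟨2 / s + 1, by positivity, ?_⟩
  set K := d * θ * (d * θ) * (2 / s ^ 2 * Real.exp t) / (1 - d * θ) with hK
  have hlim : Tendsto (fun n : ℕ => 1 - (Real.exp t / (n : ℝ) + K / Real.log n)) atTop
      (nhds 1) := by
    have a1 : Tendsto (fun n : ℕ => Real.exp t / (n : ℝ)) atTop (nhds 0) :=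
      tendsto_const_nhds.div_atTop tendsto_natCast_atTop_atTop
    have a2 : Tendsto (fun n : ℕ => K / Real.log n) atTop (nhds 0) :=
      tendsto_const_nhds.div_atTop (Real.tendsto_log_atTop.comp tendsto_natCast_atTop_atTop)
    simpa using tendsto_const_nhds (x := (1 : ℝ)).sub (a1.add a2)
  have hev : ∀ᶠ n : ℕ in atTop, 1 < n ∧ d / n ≤ 1 := by
    filter_upwards [eventually_gt_atTop 1, eventually_ge_atTop ⌈d⌉₊] with n h1 h2
    refine ⟨h1, ?_⟩
    rw [div_le_one (by positivity)]
    exact (Nat.le_ceil d).trans (by exact_mod_cast h2)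
  refine tendsto_of_tendsto_of_tendsto_of_le_of_le' hlim tendsto_const_nhds ?_ ?_
  · filter_upwards [hev] with n hn
    obtain ⟨hn, hp1⟩ := hn
    have hn' : (0 : ℝ) < n := by positivity
    have hp0 : 0 ≤ d / n := by positivity
    rw [erProb_eq_Ex n (d / n) fun X =>
      ∀ v, saw θ X n Finset.univ v ≤ (2 / s + 1) * Real.log n]
    have hpt : ∀ X ⊆ edges (⊤ : SimpleGraph (Fin n)),
        (1 : ℝ) - ∑ v : Fin n,
          (if (2 / s + 1) * Real.log n < saw θ X n Finset.univ v then (1 : ℝ) else 0) ≤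
        if ∀ v, saw θ X n Finset.univ v ≤ (2 / s + 1) * Real.log n then 1 else 0 := by
      intro X _
      split_ifs with h
      · have : (0 : ℝ) ≤ ∑ v : Fin n,
          (if (2 / s + 1) * Real.log n < saw θ X n Finset.univ v then (1 : ℝ) else 0) :=
          Finset.sum_nonneg fun v _ => by split_ifs <;> norm_num
        linarith
      · push Not at h
        obtain ⟨v, hv⟩ := h
        have := Finset.single_le_sum (s := Finset.univ) (f := fun v : Fin n =>
          (if (2 / s + 1) * Real.log n < saw θ X n Finset.univ v then (1 : ℝ) else 0))
          (fun v _ => by split_ifs <;> norm_num) (Finset.mem_univ v)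
        rw [if_pos hv] at this
        linarith
    refine le_trans ?_ ((Ex_mono hp0 hp1 hpt).trans (le_of_eq (by congr!)))
    rw [Ex_sub, Ex_const, Ex_sum]
    have htail := Finset.sum_le_sum fun (v : Fin n) (_ : v ∈ Finset.univ) =>
      saw_tail (p := d / n) (θ := θ) (q := d * θ) hn hp0 hp1 hθ0 hθ1 hq
        (le_of_eq (by field_simp)) hs ht hst v
    rw [Finset.sum_const, nsmul_eq_mul, Finset.card_univ, Fintype.card_fin] at htail
    have : (n : ℝ) * (Real.exp t / (n : ℝ) ^ 2 +
      (d / n * θ * (d * θ) * (2 / s ^ 2 * Real.exp t) / (1 - d * θ)) / Real.log n) =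
      Real.exp t / n + K / Real.log n := by
      rw [hK]; field_simp
    rw [this] at htail
    linarith
  · filter_upwards [hev] with n hn
    exact erProb_le_one (by positivity) hn.2 _

/-! ### Contraction of the tree recursion -/

/-- `log (-log (1 - p))` is convex as a function of `log p`; this is its tangent inequality at
`r0`. It is proved termwise on the power series of `-log (1 - p)`. -/
lemma tangent_log {r0 y0 b p : ℝ} (hr0 : 0 < r0) (hr1 : r0 < 1) (hy : y0 = -Real.log (1 - r0))
    (hb : 0 < b) (hby : b * y0 = r0 / (1 - r0)) (hp0 : 0 ≤ p) (hp1 : p < 1) :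
    y0 * (p / r0) ^ b ≤ -Real.log (1 - p) := by
  rcases hp0.eq_or_lt with rfl | hp0
  · simp [Real.zero_rpow hb.ne']
  set r := p / r0 with hr
  have hrpos : 0 < r := by positivity
  have s1 := Real.hasSum_pow_div_log_of_abs_lt_one (x := p) (by rw [abs_of_pos hp0]; exact hp1)
  have s2 := Real.hasSum_pow_div_log_of_abs_lt_one (x := r0) (by rw [abs_of_pos hr0]; exact hr1)
  rw [← hy] at s2
  have s3 : HasSum (fun n : ℕ => r0 ^ (n + 1)) (r0 / (1 - r0)) := by
    have := (hasSum_geometric_of_lt_one hr0.le hr1).mul_left r0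
    simpa [pow_succ', div_eq_mul_inv] using this
  have s4 := ((s2.mul_left (1 - b * Real.log r)).add (s3.mul_left (Real.log r))).mul_left (r ^ b)
  have hval : r ^ b * ((1 - b * Real.log r) * y0 + Real.log r * (r0 / (1 - r0))) = y0 * r ^ b := by
    rw [← hby]; ring
  rw [hval] at s4
  refine hasSum_le (fun n => ?_) s4 s1
  have h1 : p ^ (n + 1) = r0 ^ (n + 1) * (r ^ b * Real.exp ((n + 1 - b) * Real.log r)) := by
    have : r ^ b * Real.exp ((n + 1 - b) * Real.log r) = r ^ (n + 1) := by
      rw [Real.rpow_def_of_pos hrpos, ← Real.exp_add, ← Real.rpow_natCast,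
        Real.rpow_def_of_pos hrpos]
      congr 1; push_cast; ring
    rw [this, ← mul_pow, hr, mul_div_cancel₀ _ hr0.ne']
  have h2 := Real.add_one_le_exp ((n + 1 - b) * Real.log r)
  have hn : (0 : ℝ) < n + 1 := by positivity
  rw [h1, le_div_iff₀ hn]
  have h3 : r ^ b * ((1 - b * Real.log r) * (r0 ^ (n + 1) / (n + 1)) +
      Real.log r * r0 ^ (n + 1)) * (n + 1) =
      r0 ^ (n + 1) * (r ^ b * ((n + 1 - b) * Real.log r + 1)) := by
    field_simp; ring
  rw [h3]
  have := Real.rpow_pos_of_pos hrpos b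
  gcongr

/-- The maximum over `x` of `(x / (1 + x)) ^ b * log (lam / x)` is attained at `x0`. -/
lemma max_at_fixpoint {x0 b z0 lam x : ℝ} (hx0 : 0 < x0) (hb : 0 < b) (hz0 : z0 = (1 + x0) / b)
    (hlam : lam = x0 * Real.exp z0) (hx : 0 < x) :
    (x / (1 + x)) ^ b * Real.log (lam / x) ≤ (x0 / (1 + x0)) ^ b * z0 := by
  have hz0pos : 0 < z0 := by rw [hz0]; positivity
  have hz : Real.log (lam / x) = Real.log x0 - Real.log x + z0 := by
    rw [hlam, Real.log_div (by positivity) hx.ne', Real.log_mul hx0.ne' (Real.exp_pos _).ne',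
      Real.log_exp]
    ring
  set z := Real.log (lam / x)
  have hexp : z ≤ z0 * Real.exp (z / z0 - 1) := by
    have := Real.add_one_le_exp (z / z0 - 1)
    have h : z = z0 * (z / z0 - 1 + 1) := by field_simp; ring
    calc z = z0 * (z / z0 - 1 + 1) := h
      _ ≤ _ := by gcongr
  have hconc : x0 / (1 + x0) * (Real.log x - Real.log x0) ≤
      Real.log (1 + x) - Real.log (1 + x0) := by
    have h := Real.geom_mean_le_arith_mean2_weighted (w₁ := 1 / (1 + x0)) (w₂ := x0 / (1 + x0))
      (p₁ := 1) (p₂ := x / x0) (by positivity) (by positivity) (by positivity) (by positivity)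
      (by field_simp)
    rw [Real.one_rpow, one_mul] at h
    have h2 := Real.log_le_log (by positivity) h
    rw [Real.log_rpow (by positivity), Real.log_div hx.ne' hx0.ne'] at h2
    have h3 : 1 / (1 + x0) * 1 + x0 / (1 + x0) * (x / x0) = (1 + x) / (1 + x0) := by
      field_simp
    rwa [h3, Real.log_div (by positivity) (by positivity)] at h2
  have hmain : b * Real.log (x / (1 + x)) + (z / z0 - 1) ≤ b * Real.log (x0 / (1 + x0)) := by
    rw [Real.log_div hx.ne' (by positivity), Real.log_div hx0.ne' (by positivity)]
    have : z / z0 - 1 = b * (1 / (1 + x0) * (Real.log x0 - Real.log x)) := by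
      rw [hz, hz0]; field_simp; ring
    rw [this]
    have h4 : (1 : ℝ) / (1 + x0) = 1 - x0 / (1 + x0) := by field_simp; ring
    rw [h4]
    nlinarith [mul_le_mul_of_nonneg_left hconc hb.le]
  calc (x / (1 + x)) ^ b * z ≤ (x / (1 + x)) ^ b * (z0 * Real.exp (z / z0 - 1)) := by
        gcongr
    _ = z0 * Real.exp (b * Real.log (x / (1 + x)) + (z / z0 - 1)) := by
        rw [Real.rpow_def_of_pos (by positivity), Real.exp_add, mul_comm (Real.log _)]; ring
    _ ≤ z0 * Real.exp (b * Real.log (x0 / (1 + x0))) := by gcongr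
    _ = _ := by
        rw [Real.rpow_def_of_pos (by positivity) b, mul_comm (Real.log _) b]; ring

/-- Contraction of the tree recursion for the hard-core model below `λ_c(Δ)`, uniformly in the
number of children. The `π u` are the occupation probabilities of the children, and the fraction is
that of the parent. Bounding `π u ^ b` by a multiple of `-log (1 - π u)` turns the sum into
`log (λ_c(Δ) / x)`, where `x` is the occupation ratio of the parent, and leaves a maximization over
the single variable `x`. -/
lemma contraction {Δ lam : ℝ} (hΔ : 1 < Δ) (hlam : 0 < lam) (hle : lam ≤ lamc Δ) :
    ∃ b : ℝ, 1 ≤ b ∧ ∀ {ι : Type} (B : Finset ι) (π : ι → ℝ),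
      (∀ u ∈ B, 0 ≤ π u ∧ π u < 1) →
      ((lam * ∏ u ∈ B, (1 - π u)) / (1 + lam * ∏ u ∈ B, (1 - π u))) ^ b * ∑ u ∈ B, π u ^ b ≤
        (1 / Δ) ^ (2 * b - 1) := by
  have hΔ0 : 0 < Δ := by linarith
  have hΔ1 : 0 < Δ - 1 := by linarith
  set r0 := 1 / Δ with hr0
  set x0 := 1 / (Δ - 1) with hx0
  set y0 := -Real.log (1 - r0) with hy0
  have hr0pos : 0 < r0 := by positivity
  have hr01 : r0 < 1 := by rw [hr0, div_lt_one hΔ0]; exact hΔ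
  have h1r0 : 1 - r0 = (Δ - 1) / Δ := by rw [hr0]; field_simp
  have hy0' : y0 = Real.log (Δ / (Δ - 1)) := by
    rw [hy0, h1r0, ← Real.log_inv, inv_div]
  have hy0pos : 0 < y0 := by
    rw [hy0']
    exact Real.log_pos (by rw [lt_div_iff₀ hΔ1]; linarith)
  have hy0le : y0 ≤ 1 / (Δ - 1) := by
    rw [hy0']
    refine (Real.log_le_sub_one_of_pos (by positivity)).trans (le_of_eq ?_)
    field_simp; ring
  -- This exponent is the slope in `tangent_log` at `r0`, and it puts the maximum over `x` at the fixed
  -- point `x0 = r0 / (1 - r0)` of the recursion on the `Δ`-ary tree with parameter `lamc Δ`.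
  set b := 1 / ((Δ - 1) * y0) with hb
  have hbpos : 0 < b := by positivity
  have hb1 : 1 ≤ b := by
    rw [hb, le_div_iff₀ (by positivity)]
    rw [le_div_iff₀ hΔ1] at hy0le
    linarith
  have hby : b * y0 = r0 / (1 - r0) := by
    rw [h1r0, hr0, hb]; field_simp
  set z0 := (1 + x0) / b with hz0
  have hz0' : z0 = Δ * y0 := by
    rw [hz0, hb, hx0]; field_simp; ring
  have hlamc : lamc Δ = x0 * Real.exp z0 := by
    rw [hz0', hy0', mul_comm Δ, ← Real.rpow_def_of_pos (by positivity), lamc, hx0,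
      Real.div_rpow hΔ0.le hΔ1.le, Real.rpow_add_one hΔ1.ne']
    field_simp
  have hp0 : x0 / (1 + x0) = r0 := by
    rw [hx0, hr0]; field_simp; ring
  refine ⟨b, hb1, ?_⟩
  intro ι B π hπ
  have hprod : 0 < ∏ u ∈ B, (1 - π u) := Finset.prod_pos fun u hu => by linarith [(hπ u hu).2]
  have hlamc0 : 0 < lamc Δ := lt_of_lt_of_le hlam hle
  set x := lamc Δ * ∏ u ∈ B, (1 - π u) with hx
  have hxpos : 0 < x := by positivity
  have hP : (lam * ∏ u ∈ B, (1 - π u)) / (1 + lam * ∏ u ∈ B, (1 - π u)) ≤ x / (1 + x) := by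
    rw [div_le_div_iff₀ (by positivity) (by positivity)]
    have : lam * ∏ u ∈ B, (1 - π u) ≤ x := by rw [hx]; gcongr
    nlinarith
  have hsum : ∑ u ∈ B, π u ^ b ≤ r0 ^ b / y0 * Real.log (lamc Δ / x) := by
    have h1 : Real.log (lamc Δ / x) = ∑ u ∈ B, -Real.log (1 - π u) := by
      rw [hx, Finset.sum_neg_distrib, ← Real.log_prod fun u hu => by linarith [(hπ u hu).2],
        ← Real.log_inv]
      congr 1; field_simp
    rw [h1, Finset.mul_sum]
    refine Finset.sum_le_sum fun u hu => ?_
    have h2 := tangent_log hr0pos hr01 hy0 hbpos hby (hπ u hu).1 (hπ u hu).2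
    rw [Real.div_rpow (hπ u hu).1 hr0pos.le] at h2
    have h3 : 0 < r0 ^ b := Real.rpow_pos_of_pos hr0pos _
    calc π u ^ b = r0 ^ b / y0 * (y0 * (π u ^ b / r0 ^ b)) := by field_simp
      _ ≤ _ := by gcongr
  have hsum0 : 0 ≤ ∑ u ∈ B, π u ^ b := Finset.sum_nonneg fun u hu => Real.rpow_nonneg (hπ u hu).1 _
  have hmax := max_at_fixpoint (b := b) (x0 := x0) (by positivity) hbpos hz0 hlamc hxpos
  rw [hp0] at hmax
  have h3 : 0 < r0 ^ b := Real.rpow_pos_of_pos hr0pos _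
  calc ((lam * ∏ u ∈ B, (1 - π u)) / (1 + lam * ∏ u ∈ B, (1 - π u))) ^ b * ∑ u ∈ B, π u ^ b
      ≤ (x / (1 + x)) ^ b * (r0 ^ b / y0 * Real.log (lamc Δ / x)) := by
        gcongr
    _ = r0 ^ b / y0 * ((x / (1 + x)) ^ b * Real.log (lamc Δ / x)) := by ring
    _ ≤ r0 ^ b / y0 * (r0 ^ b * z0) := by gcongr
    _ = r0 ^ (2 * b - 1) := by
        rw [hz0', Real.rpow_sub_one hr0pos.ne', two_mul, Real.rpow_add hr0pos]
        rw [hr0]; field_simp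

/-- There is room above `d`: by continuity of `lamc` if `d > 1`, and because `lamc Δ` tends to infinity
as `Δ` decreases to `1` if `d = 1`. -/
lemma exists_larger_degree {d lam : ℝ} (hd : 1 ≤ d) (hlam : 0 < lam)
    (hcrit : 1 < d → lam < lamc d) : ∃ Δ, d < Δ ∧ lam ≤ lamc Δ := by
  rcases hd.eq_or_lt with rfl | hd
  · set u := min 1 (1 / lam) with hu
    have hu0 : 0 < u := lt_min one_pos (by positivity)
    have hu1 : u ≤ 1 := min_le_left _ _
    have hul : u ≤ 1 / lam := min_le_right _ _
    refine ⟨1 + u, by linarith, ?_⟩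
    have h1 : 1 ≤ (1 + u) ^ (1 + u) := Real.one_le_rpow (by linarith) (by linarith)
    have h2 : (1 + u - 1) ^ (1 + u + 1) ≤ u := by
      have := Real.rpow_le_rpow_of_exponent_ge hu0 hu1 (show (1 : ℝ) ≤ 1 + u + 1 by linarith)
      rwa [Real.rpow_one, show u ^ (1 + u + 1) = (1 + u - 1) ^ (1 + u + 1) by ring_nf] at this
    have h3 : 0 < (1 + u - 1) ^ (1 + u + 1) := Real.rpow_pos_of_pos (by linarith) _
    rw [lamc, le_div_iff₀ h3]
    rw [le_div_iff₀ hlam] at hul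
    nlinarith
  · have hc : ContinuousAt lamc d := by
      unfold lamc
      refine ContinuousAt.div ?_ ?_ (Real.rpow_pos_of_pos (by linarith) _).ne'
      · exact ContinuousAt.rpow continuousAt_id continuousAt_id (Or.inl (by simp; linarith))
      · exact ContinuousAt.rpow (by fun_prop) (by fun_prop) (Or.inl (by linarith))
    have h1 : ∀ᶠ Δ in nhds d, lam < lamc Δ := hc.eventually_const_lt (hcrit hd)
    have h2 : ∀ᶠ Δ in nhdsWithin d (Set.Ioi d), d < Δ := eventually_mem_nhdsWithin
    obtain ⟨Δ, hΔ, hΔ'⟩ := ((h1.filter_mono nhdsWithin_le_nhds).and h2).exists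
    exact ⟨Δ, hΔ', hΔ.le⟩

/-- The contraction in the form used in the induction: Hölder's inequality splits the influences
from the numbers of walks. -/
lemma contraction_holder {Δ lam : ℝ} (hΔ : 1 < Δ) (hlam : 0 < lam) (hle : lam ≤ lamc Δ) :
    ∃ γ : ℝ, 0 < γ ∧ γ < 1 ∧ ∀ {ι : Type} (B : Finset ι) (π W : ι → ℝ) (P : ℝ),
      (∀ u ∈ B, 0 ≤ π u ∧ π u < 1) → (∀ u ∈ B, 0 ≤ W u) →
      P = (lam * ∏ u ∈ B, (1 - π u)) / (1 + lam * ∏ u ∈ B, (1 - π u)) →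
      √P * ∑ u ∈ B, √(π u) * W u ^ γ ≤ (1 / Δ * ∑ u ∈ B, W u) ^ γ := by
  obtain ⟨b, hb1, hb⟩ := contraction hΔ hlam hle
  have hb0 : 0 < b := by linarith
  set γ := 1 - (2 * b)⁻¹ with hγ
  have hinv : (2 * b)⁻¹ ≤ 2⁻¹ := inv_anti₀ (by norm_num) (by linarith)
  have hinv0 : 0 < (2 * b)⁻¹ := by positivity
  have hγ0 : 0 < γ := by
    have : (2 : ℝ)⁻¹ < 1 := by norm_num
    rw [hγ]; linarith
  refine ⟨γ, hγ0, by linarith, ?_⟩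
  intro ι B π W P hπ hW hP
  have hconj : (2 * b).HolderConjugate γ⁻¹ := by
    rw [Real.holderConjugate_iff]
    refine ⟨by linarith, ?_⟩
    rw [inv_inv, hγ]; ring
  have hprod : 0 ≤ ∏ u ∈ B, (1 - π u) := Finset.prod_nonneg fun u hu => by linarith [(hπ u hu).2]
  have hP0 : 0 ≤ P := by rw [hP]; positivity
  have hbB := hb B π hπ
  rw [← hP] at hbB
  have hol := Real.inner_le_Lp_mul_Lq_of_nonneg B hconj (f := fun u => √P * √(π u))
    (g := fun u => W u ^ γ) (fun u _ => by positivity) (fun u hu => Real.rpow_nonneg (hW u hu) _)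
  have e1 : ∑ u ∈ B, (√P * √(π u)) ^ (2 * b) = P ^ b * ∑ u ∈ B, π u ^ b := by
    rw [Finset.mul_sum]
    refine Finset.sum_congr rfl fun u hu => ?_
    rw [← Real.sqrt_mul hP0, Real.rpow_mul (Real.sqrt_nonneg _), Real.rpow_two,
      Real.sq_sqrt (mul_nonneg hP0 (hπ u hu).1), Real.mul_rpow hP0 (hπ u hu).1]
  have e2 : ∑ u ∈ B, (W u ^ γ) ^ γ⁻¹ = ∑ u ∈ B, W u :=
    Finset.sum_congr rfl fun u hu => by
      rw [← Real.rpow_mul (hW u hu), mul_inv_cancel₀ hγ0.ne', Real.rpow_one]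
  rw [e1, e2] at hol
  have hWs : 0 ≤ ∑ u ∈ B, W u := Finset.sum_nonneg hW
  have hS : 0 ≤ P ^ b * ∑ u ∈ B, π u ^ b := mul_nonneg (Real.rpow_nonneg hP0 _)
    (Finset.sum_nonneg fun u hu => Real.rpow_nonneg (hπ u hu).1 _)
  have hΔ' : 0 ≤ 1 / Δ := by positivity
  calc √P * ∑ u ∈ B, √(π u) * W u ^ γ = ∑ u ∈ B, √P * √(π u) * W u ^ γ := by
        rw [Finset.mul_sum]; exact Finset.sum_congr rfl fun u _ => by ring
    _ ≤ _ := hol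
    _ ≤ ((1 / Δ) ^ (2 * b - 1)) ^ (1 / (2 * b)) * (∑ u ∈ B, W u) ^ (1 / γ⁻¹) := by gcongr
    _ = _ := by
        rw [← Real.rpow_mul hΔ', one_div γ⁻¹, inv_inv, Real.mul_rpow hΔ' hWs]
        congr 2
        rw [hγ]; field_simp

/-! ### Influences in the hard-core model -/

section HardCore
variable {V : Type} [Fintype V] [DecidableEq V]

/-- Independent sets of `G`, as finsets. -/
def Indep (G : SimpleGraph V) (I : Finset V) : Prop := ∀ u ∈ I, ∀ v ∈ I, ¬ G.Adj u v

/-- The unnormalised hard-core expectation of `g` over the independent sets contained in `T`. -/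
noncomputable def isum (G : SimpleGraph V) (lam : ℝ) (T : Finset V) (g : Finset V → ℝ) : ℝ :=
  ∑ I ∈ T.powerset, if Indep G I then lam ^ I.card * g I else 0

/-- The partition function of the subgraph induced on `T`. -/
noncomputable def pf (G : SimpleGraph V) (lam : ℝ) (T : Finset V) : ℝ := isum G lam T fun _ => 1

/-- The occupation probability of `w` in the hard-core model on the subgraph induced on `T`. -/
noncomputable def occ (G : SimpleGraph V) (lam : ℝ) (T : Finset V) (w : V) : ℝ :=
  isum G lam T (fun I => if w ∈ I then 1 else 0) / pf G lam T

/-- What remains of `T` when `v` is occupied. -/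
noncomputable def cut (G : SimpleGraph V) (T : Finset V) (v : V) : Finset V :=
  (T.erase v).filter fun u => ¬ G.Adj v u

/-- The total influence of `v` in the hard-core model on `T`: the total change of the occupation
probabilities of the other vertices between `v` being occupied and `v` being vacant. -/
noncomputable def infl (G : SimpleGraph V) (lam : ℝ) (T : Finset V) (v : V) : ℝ :=
  ∑ w, |occ G lam (cut G T v) w - occ G lam (T.erase v) w|

variable {G : SimpleGraph V} {lam : ℝ}

lemma isum_congr {T : Finset V} {g h : Finset V → ℝ} (H : ∀ I ⊆ T, g I = h I) :
    isum G lam T g = isum G lam T h :=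
  Finset.sum_congr rfl fun I hI => by rw [H I (Finset.mem_powerset.1 hI)]

lemma isum_zero (T : Finset V) : isum G lam T (fun _ => 0) = 0 := by simp [isum]

lemma indep_insert {v : V} {I : Finset V} :
    Indep G (insert v I) ↔ Indep G I ∧ ∀ u ∈ I, ¬ G.Adj v u := by
  simp only [Indep, Finset.mem_insert, forall_eq_or_imp, SimpleGraph.irrefl, not_false_eq_true,
    true_and]
  constructor
  · rintro ⟨h1, h2⟩
    exact ⟨fun u hu => (h2 u hu).2, h1⟩
  · rintro ⟨h1, h2⟩
    exact ⟨h2, fun u hu => ⟨fun h => h2 u hu h.symm, h1 u hu⟩⟩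

/-- Splitting according to the spin of `v`. -/
lemma isum_split {T : Finset V} {v : V} (hv : v ∈ T) (g : Finset V → ℝ) :
    isum G lam T g =
      isum G lam (T.erase v) g + lam * isum G lam (cut G T v) (fun I => g (insert v I)) := by
  have hT : T = insert v (T.erase v) := (Finset.insert_erase hv).symm
  conv_lhs => rw [hT]
  unfold isum
  rw [Finset.sum_powerset_insert (Finset.notMem_erase v T)]
  congr 1
  have hpow : (cut G T v).powerset
      = (T.erase v).powerset.filter fun I => ∀ u ∈ I, ¬ G.Adj v u := by
    ext I
    simp only [cut, Finset.mem_powerset, Finset.mem_filter, Finset.subset_iff]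
    exact ⟨fun h => ⟨fun x hx => (h hx).1, fun x hx => (h hx).2⟩,
      fun h x hx => ⟨h.1 hx, h.2 x hx⟩⟩
  rw [hpow, Finset.sum_filter, Finset.mul_sum]
  refine Finset.sum_congr rfl fun I hI => ?_
  have hvI : v ∉ I := fun h => Finset.notMem_erase v T (Finset.mem_powerset.1 hI h)
  rw [Finset.card_insert_of_notMem hvI]
  by_cases h1 : Indep G I <;> by_cases h2 : ∀ u ∈ I, ¬ G.Adj v u
  · rw [if_pos (indep_insert.2 ⟨h1, h2⟩), if_pos h2, if_pos h1]; ring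
  · rw [if_neg (fun h => h2 (indep_insert.1 h).2), if_neg h2, mul_zero]
  · rw [if_neg (fun h => h1 (indep_insert.1 h).1), if_pos h2, if_neg h1, mul_zero]
  · rw [if_neg (fun h => h2 (indep_insert.1 h).2), if_neg h2, mul_zero]

lemma pf_pos (hlam : 0 < lam) (T : Finset V) : 0 < pf G lam T := by
  unfold pf isum
  refine Finset.sum_pos' (fun I _ => by split_ifs <;> positivity) ⟨∅, by simp, ?_⟩
  simp [Indep]

lemma occ_notMem {T : Finset V} {w : V} (h : w ∉ T) : occ G lam T w = 0 := by
  unfold occ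
  rw [isum_congr (h := fun _ => 0) (fun I hI => if_neg fun hw => h (hI hw)), isum_zero, zero_div]

lemma occ_nonneg (hlam : 0 < lam) (T : Finset V) (w : V) : 0 ≤ occ G lam T w := by
  refine div_nonneg (Finset.sum_nonneg fun I _ => ?_) (pf_pos hlam T).le
  split_ifs <;> positivity

lemma pf_split {T : Finset V} {v : V} (hv : v ∈ T) :
    pf G lam T = pf G lam (T.erase v) + lam * pf G lam (cut G T v) := isum_split hv _

lemma occ_self {T : Finset V} {v : V} (hv : v ∈ T) :
    occ G lam T v = lam * pf G lam (cut G T v) / pf G lam T := by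
  unfold occ
  rw [isum_split hv, isum_congr (T := T.erase v) (h := fun _ => 0)
    (fun I hI => if_neg fun hw => Finset.notMem_erase v T (hI hw)), isum_zero, zero_add]
  congr 2
  exact isum_congr fun I _ => if_pos (Finset.mem_insert_self _ _)

lemma one_sub_occ (hlam : 0 < lam) (T : Finset V) (v : V) :
    1 - occ G lam T v = pf G lam (T.erase v) / pf G lam T := by
  have := pf_pos (G := G) hlam T
  by_cases hv : v ∈ T
  · rw [occ_self hv, eq_div_iff this.ne', sub_mul, div_mul_cancel₀ _ this.ne', one_mul,
      pf_split hv]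
    ring
  · rw [occ_notMem hv, Finset.erase_eq_of_notMem hv, div_self this.ne', sub_zero]

lemma occ_lt_one (hlam : 0 < lam) (T : Finset V) (v : V) : occ G lam T v < 1 := by
  have := one_sub_occ (G := G) hlam T v
  have h2 : 0 < pf G lam (T.erase v) / pf G lam T := div_pos (pf_pos hlam _) (pf_pos hlam _)
  linarith

/-- Total probability, conditioning on the spin of `v`. -/
lemma occ_mix (hlam : 0 < lam) {T : Finset V} {v w : V} (hv : v ∈ T) (hw : w ≠ v) :
    occ G lam T w = occ G lam T v * occ G lam (cut G T v) w
      + (1 - occ G lam T v) * occ G lam (T.erase v) w := by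
  rw [one_sub_occ hlam, occ_self hv]
  have h1 := pf_pos (G := G) hlam T
  have h2 := pf_pos (G := G) hlam (T.erase v)
  have h3 := pf_pos (G := G) hlam (cut G T v)
  unfold occ
  rw [isum_split hv, isum_congr (T := cut G T v) (g := fun I => if w ∈ insert v I then 1 else 0)
    (h := fun I => if w ∈ I then 1 else 0) (fun I _ => by simp [hw])]
  field_simp
  ring

lemma infl_nonneg (T : Finset V) (v : V) : 0 ≤ infl G lam T v :=
  Finset.sum_nonneg fun _ _ => abs_nonneg _

/-- Deleting `v` changes the occupation probabilities by at most the probability of `v` being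
occupied, times the influence of `v`. -/
lemma sum_erase_sub (hlam : 0 < lam) (T : Finset V) (v : V) :
    ∑ w, |occ G lam (T.erase v) w - occ G lam T w| ≤ occ G lam T v * (1 + infl G lam T v) := by
  by_cases hv : v ∈ T
  swap
  · rw [Finset.erase_eq_of_notMem hv, occ_notMem hv]; simp
  have h0 := occ_nonneg (G := G) hlam T v
  have key : ∀ w, |occ G lam (T.erase v) w - occ G lam T w| ≤ occ G lam T v *
      ((if w = v then 1 else 0) + |occ G lam (cut G T v) w - occ G lam (T.erase v) w|) := by
    intro w
    by_cases hw : w = v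
    · subst hw
      rw [occ_notMem (Finset.notMem_erase w T), zero_sub, abs_neg, abs_of_nonneg h0, if_pos rfl]
      exact le_mul_of_one_le_right h0 (le_add_of_nonneg_right (abs_nonneg _))
    · rw [if_neg hw, zero_add, abs_sub_comm, occ_mix hlam hv hw]
      refine le_of_eq ?_
      rw [show ∀ p a b : ℝ, p * a + (1 - p) * b - b = p * (a - b) by intros; ring, abs_mul,
        abs_of_nonneg h0]
  refine (Finset.sum_le_sum fun w _ => key w).trans (le_of_eq ?_)
  rw [← Finset.mul_sum, Finset.sum_add_distrib]
  simp [infl]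

/-- Deleting the vertices of `B` one at a time; `π u` is the occupation probability of `u` at the
moment when `u` is deleted. -/
lemma telescope (hlam : 0 < lam) {T : Finset V} (b : V → ℝ)
    (hb : ∀ S ⊆ T, ∀ u ∈ S, √(occ G lam S u) * (1 + infl G lam S u) ≤ b u)
    (B : Finset V) (hB : B ⊆ T) :
    ∃ π : V → ℝ, (∀ u ∈ B, 0 ≤ π u ∧ π u < 1) ∧
      ∏ u ∈ B, (1 - π u) = pf G lam (T \ B) / pf G lam T ∧
      ∑ w, |occ G lam (T \ B) w - occ G lam T w| ≤ ∑ u ∈ B, √(π u) * b u := by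
  induction B using Finset.induction_on with
  | empty =>
    refine ⟨fun _ => 0, by simp, ?_, by simp⟩
    simp [(pf_pos (G := G) hlam T).ne']
  | insert u B hu ih =>
    obtain ⟨π, h1, h2, h3⟩ := ih ((Finset.subset_insert _ _).trans hB)
    have huT : u ∈ T \ B := Finset.mem_sdiff.2 ⟨hB (Finset.mem_insert_self _ _), hu⟩
    have hS : T \ insert u B = (T \ B).erase u := by
      ext x; simp only [Finset.mem_sdiff, Finset.mem_insert, Finset.mem_erase]; tauto
    have hne : ∀ x ∈ B, x ≠ u := fun x hx h => hu (h ▸ hx)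
    have h0 := occ_nonneg (G := G) hlam (T \ B) u
    refine ⟨Function.update π u (occ G lam (T \ B) u), ?_, ?_, ?_⟩
    · intro x hx
      rcases Finset.mem_insert.1 hx with rfl | hx
      · rw [Function.update_self]; exact ⟨h0, occ_lt_one hlam _ _⟩
      · rw [Function.update_of_ne (hne x hx)]; exact h1 x hx
    · rw [Finset.prod_insert hu, Function.update_self, one_sub_occ hlam, hS,
        Finset.prod_congr rfl (fun x hx => by rw [Function.update_of_ne (hne x hx)]), h2]
      have := pf_pos (G := G) hlam (T \ B)
      have := pf_pos (G := G) hlam T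
      field_simp
    · rw [Finset.sum_insert hu, Function.update_self, hS]
      have h7 : ∑ x ∈ B, √(Function.update π u (occ G lam (T \ B) u) x) * b x
          = ∑ x ∈ B, √(π x) * b x :=
        Finset.sum_congr rfl fun x hx => by rw [Function.update_of_ne (hne x hx)]
      rw [h7]
      have h4 : ∑ w, |occ G lam ((T \ B).erase u) w - occ G lam T w|
          ≤ ∑ w, |occ G lam ((T \ B).erase u) w - occ G lam (T \ B) w|
            + ∑ w, |occ G lam (T \ B) w - occ G lam T w| := by
        rw [← Finset.sum_add_distrib]
        exact Finset.sum_le_sum fun w _ => abs_sub_le _ _ _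
      have h5 := sum_erase_sub (G := G) hlam (T \ B) u
      have h6 := mul_le_mul_of_nonneg_left (hb (T \ B) Finset.sdiff_subset u huT)
        (Real.sqrt_nonneg (occ G lam (T \ B) u))
      rw [← mul_assoc, Real.mul_self_sqrt h0] at h6
      linarith

lemma cut_eq_sdiff (T : Finset V) (v : V) :
    cut G T v = T.erase v \ (T.erase v).filter fun u => G.Adj v u := by
  ext x; simp only [cut, Finset.mem_filter, Finset.mem_sdiff]; tauto

/-- The total influence of a vertex is controlled by the self-avoiding walks from its neighbours.
The induction hypothesis carries the factor `√(occ G lam T v)`, which is what `contraction_holder`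
needs; it is dropped at the root, where only the number of neighbours matters. -/
lemma infl_le_saw {Δ θ : ℝ} (hΔ : 1 < Δ) (hlam : 0 < lam) (hle : lam ≤ lamc Δ) (hθ : 1 < Δ * θ)
    (hθ0 : 0 < θ) :
    ∃ γ C : ℝ, 0 < γ ∧ γ < 1 ∧ 0 < C ∧ ∀ {V : Type} [Fintype V] [DecidableEq V]
      (G : SimpleGraph V) (X : Finset (Sym2 V)), (∀ u v, s(u, v) ∈ X ↔ G.Adj u v) →
      ∀ (k : ℕ) (T : Finset V), T.card ≤ k → ∀ v ∈ T,
        infl G lam T v ≤ ∑ u ∈ (T.erase v).filter (fun u => G.Adj v u), C * saw θ X k T u ^ γ := by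
  obtain ⟨γ, hγ0, hγ1, H⟩ := contraction_holder hΔ hlam hle
  have hq0 : 0 < 1 / (Δ * θ) := by positivity
  have hq1 : 1 / (Δ * θ) < 1 := by rw [div_lt_one (by linarith)]; exact hθ
  set r := (1 / (Δ * θ)) ^ γ with hr
  have hr1 : r < 1 := Real.rpow_lt_one hq0.le hq1 hγ0
  have hr0 : 0 < r := Real.rpow_pos_of_pos hq0 _
  -- The constant for which the inductive bound `1 + C * r * W ^ γ ≤ C * W ^ γ` closes up.
  set C := 1 / (1 - r) with hC
  have hC0 : 0 < C := by rw [hC]; apply div_pos one_pos; linarith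
  have hCr : 1 + C * r = C := by
    rw [hC]; field_simp [show 1 - r ≠ 0 by linarith]; ring
  refine ⟨γ, C, hγ0, hγ1, hC0, ?_⟩
  intro V _ _ G X hX
  have step : ∀ (k : ℕ) (T : Finset V), ∀ v ∈ T,
      (∀ S ⊆ T.erase v, ∀ u ∈ S, √(occ G lam S u) * (1 + infl G lam S u)
        ≤ C * saw θ X k (T.erase v) u ^ γ) →
      infl G lam T v ≤
        ∑ u ∈ (T.erase v).filter (fun u => G.Adj v u), C * saw θ X k (T.erase v) u ^ γ ∧
      √(occ G lam T v) * (1 + infl G lam T v) ≤ C * saw θ X (k + 1) T v ^ γ := by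
    intro k T v hv hb
    set T₀ := T.erase v
    set B := T₀.filter (fun u => G.Adj v u) with hBdef
    obtain ⟨π, h1, h2, h3⟩ := telescope hlam (fun u => C * saw θ X k T₀ u ^ γ) hb B
      (Finset.filter_subset _ _)
    rw [← cut_eq_sdiff] at h2 h3
    have h3' : infl G lam T v ≤ ∑ u ∈ B, √(π u) * (C * saw θ X k T₀ u ^ γ) := h3
    have hW0 : ∀ u, 1 ≤ saw θ X k T₀ u := fun u => saw_one_le hθ0.le X k T₀ u
    have hWγ : ∀ u, 0 ≤ saw θ X k T₀ u ^ γ := fun u => Real.rpow_nonneg (by linarith [hW0 u]) _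
    refine ⟨h3'.trans (Finset.sum_le_sum fun u hu => ?_), ?_⟩
    · refine mul_le_of_le_one_left (mul_nonneg hC0.le (hWγ u)) ?_
      exact Real.sqrt_le_one.2 (h1 u hu).2.le
    have hZ := pf_pos (G := G) hlam T
    have hZ0 := pf_pos (G := G) hlam T₀
    have hP : occ G lam T v = (lam * ∏ u ∈ B, (1 - π u)) / (1 + lam * ∏ u ∈ B, (1 - π u)) := by
      have hZc := pf_pos (G := G) hlam (cut G T v)
      rw [occ_self hv, h2, pf_split hv]
      change _ / (pf G lam T₀ + _) = _
      field_simp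
    have hh := H B π (fun u => saw θ X k T₀ u) _ h1 (fun u _ => by linarith [hW0 u]) hP
    have hsaw : saw θ X (k + 1) T v = 1 + θ * ∑ u ∈ B, saw θ X k T₀ u := by
      rw [saw, hBdef, Finset.sum_filter]
      simp only [hX]
      rfl
    have hsum : 0 ≤ ∑ u ∈ B, saw θ X k T₀ u := Finset.sum_nonneg fun u _ => by linarith [hW0 u]
    have hW1 : 1 ≤ saw θ X (k + 1) T v := saw_one_le hθ0.le _ _ _ _
    have hrW : (1 / Δ * ∑ u ∈ B, saw θ X k T₀ u) ^ γ ≤ r * saw θ X (k + 1) T v ^ γ := by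
      rw [hr, ← Real.mul_rpow hq0.le (by linarith)]
      refine Real.rpow_le_rpow (by positivity) ?_ hγ0.le
      rw [hsaw]
      have : 1 / Δ * ∑ u ∈ B, saw θ X k T₀ u
          = 1 / (Δ * θ) * (θ * ∑ u ∈ B, saw θ X k T₀ u) := by field_simp
      rw [this]
      gcongr
      linarith
    have hsq1 : √(occ G lam T v) ≤ 1 :=
      Real.sqrt_le_one.2 (occ_lt_one hlam T v).le
    have hWγ1 : 1 ≤ saw θ X (k + 1) T v ^ γ := Real.one_le_rpow hW1 hγ0.le
    calc √(occ G lam T v) * (1 + infl G lam T v)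
        ≤ √(occ G lam T v) * (1 + ∑ u ∈ B, √(π u) * (C * saw θ X k T₀ u ^ γ)) := by gcongr
      _ = √(occ G lam T v)
          + C * (√(occ G lam T v) * ∑ u ∈ B, √(π u) * saw θ X k T₀ u ^ γ) := by
          rw [mul_add, mul_one, Finset.mul_sum, Finset.mul_sum, Finset.mul_sum]
          congr 1
          exact Finset.sum_congr rfl fun u _ => by ring
      _ ≤ saw θ X (k + 1) T v ^ γ + C * (r * saw θ X (k + 1) T v ^ γ) := by
          exact add_le_add (by linarith) (mul_le_mul_of_nonneg_left (hh.trans hrW) hC0.le)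
      _ = (1 + C * r) * saw θ X (k + 1) T v ^ γ := by ring
      _ = _ := by rw [hCr]
  have main : ∀ (k : ℕ) (T : Finset V), T.card ≤ k → ∀ v ∈ T,
      √(occ G lam T v) * (1 + infl G lam T v) ≤ C * saw θ X k T v ^ γ := by
    intro k
    induction k with
    | zero =>
      intro T hT v hv
      simp only [Nat.le_zero, Finset.card_eq_zero] at hT
      simp [hT] at hv
    | succ k ih =>
      intro T hT v hv
      refine (step k T v hv fun S hS u hu => ?_).2
      have hc : S.card ≤ k := by
        have := Finset.card_le_card hS
        rw [Finset.card_erase_of_mem hv] at this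
        omega
      refine (ih S hc u hu).trans ?_
      have h1 := saw_one_le hθ0.le X k S u
      have h2 := saw_mono hθ0.le X k hS u
      gcongr
  intro k T hT v hv
  have h0 : 0 < T.card := Finset.card_pos.2 ⟨v, hv⟩
  refine (step k T v hv fun S hS u hu => ?_).1.trans (Finset.sum_le_sum fun u _ => ?_)
  · have hc : S.card ≤ k := (Finset.card_le_card (hS.trans (Finset.erase_subset _ _))).trans hT
    refine (main k S hc u hu).trans ?_
    have h1 := saw_one_le hθ0.le X k S u
    have h2 := saw_mono hθ0.le X k hS u
    gcongr
  · have h1 := saw_one_le hθ0.le X k (T.erase v) u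
    have h2 := saw_mono hθ0.le X k (Finset.erase_subset v T) u
    gcongr

end HardCore

/-! ### Influence matrices of the marginal -/

lemma sum_comp_le {ι κ : Type*} [Fintype ι] [Fintype κ] {e : ι → κ} (he : Function.Injective e)
    {f : κ → ℝ} (hf : ∀ k, 0 ≤ f k) : ∑ i, f (e i) ≤ ∑ k, f k := by
  rw [← Finset.sum_image (s := Finset.univ) (f := f) (g := e) (fun a _ b _ h => he h)]
  exact Finset.sum_le_sum_of_subset_of_nonneg (Finset.subset_univ _) fun k _ _ => hf k

/-- Real eigenvalues are at most the maximal absolute row sum. -/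
lemma eigenvalue_le {ι : Type*} [Fintype ι] (M : Matrix ι ι ℝ) {K : ℝ}
    (h : ∀ p, ∑ q, |M p q| ≤ K) {t : ℝ} {x : ι → ℝ} (hx : x ≠ 0) (he : M.mulVec x = t • x) :
    t ≤ K := by
  obtain ⟨j, hj⟩ := Function.ne_iff.1 hx
  have : Nonempty ι := ⟨j⟩
  obtain ⟨p, hp⟩ := Finite.exists_max fun i => |x i|
  have hp0 : 0 < |x p| := lt_of_lt_of_le (abs_pos.2 hj) (hp j)
  have h1 : t * x p = ∑ q, M p q * x q := by
    have := congrFun he p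
    simp only [Matrix.mulVec, dotProduct, Pi.smul_apply, smul_eq_mul] at this
    exact this.symm
  have h2 : |t| * |x p| ≤ K * |x p| := by
    rw [← abs_mul, h1]
    calc |∑ q, M p q * x q| ≤ ∑ q, |M p q * x q| := Finset.abs_sum_le_sum_abs _ _
      _ ≤ ∑ q, |M p q| * |x p| := Finset.sum_le_sum fun q _ => by
          rw [abs_mul]; exact mul_le_mul_of_nonneg_left (hp q) (abs_nonneg _)
      _ ≤ K * |x p| := by
          rw [← Finset.sum_mul]; exact mul_le_mul_of_nonneg_right (h p) hp0.le
  exact (le_abs_self t).trans (le_of_mul_le_mul_right h2 hp0)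

section Spectral
variable {V : Type} [Fintype V]

/-- The indicator of the event that `v` has spin `i`, as a function of the occupied set. -/
noncomputable def ind (v : V) (i : Bool) (I : Finset V) : ℝ := if decide (v ∈ I) = i then 1 else 0

variable {G : SimpleGraph V} {lam : ℝ}

/-- Fixing the spin of `v` turns the hard-core model on `T` into the one on a subset of `T`,
up to a factor; the factor vanishes when the spin is impossible. -/
lemma isum_ind (hlam : 0 < lam) (T : Finset V) (v : V) (i : Bool) :
    ∃ (c : ℝ) (T' : Finset V), 0 ≤ c ∧ (v ∉ T → T' = T) ∧
      (v ∈ T → T' = if i then cut G T v else T.erase v) ∧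
      ∀ g : Finset V → ℝ, (∀ I, g (insert v I) = g I) →
        isum G lam T (fun I => ind v i I * g I) = c * isum G lam T' g := by
  by_cases hv : v ∈ T
  · cases i
    · refine ⟨1, T.erase v, zero_le_one, fun h => absurd hv h, fun _ => by simp, fun g hg => ?_⟩
      rw [isum_split hv, isum_congr (T := T.erase v) (h := g), isum_congr (T := cut G T v)
        (h := fun _ => 0), isum_zero]
      · ring
      · intro I _; simp [ind]
      · intro I hI
        have : v ∉ I := fun h => Finset.notMem_erase v T (hI h)
        simp [ind, this]
    · refine ⟨lam, cut G T v, hlam.le, fun h => absurd hv h, fun _ => by simp, fun g hg => ?_⟩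
      rw [isum_split hv, isum_congr (T := T.erase v) (h := fun _ => 0),
        isum_congr (T := cut G T v) (h := g), isum_zero, zero_add]
      · intro I _; simp [ind, hg]
      · intro I hI
        have : v ∉ I := fun h => Finset.notMem_erase v T (hI h)
        simp [ind, this]
  · cases i
    · refine ⟨1, T, zero_le_one, fun _ => rfl, fun h => absurd h hv, fun g hg => ?_⟩
      rw [one_mul]
      refine isum_congr fun I hI => ?_
      have : v ∉ I := fun h => hv (hI h)
      simp [ind, this]
    · refine ⟨0, T, le_rfl, fun _ => rfl, fun h => absurd h hv, fun g hg => ?_⟩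
      rw [zero_mul, ← isum_zero (G := G) (lam := lam) T]
      refine isum_congr fun I hI => ?_
      have : v ∉ I := fun h => hv (hI h)
      simp [ind, this]

/-- Fixing the spins on a set `A` of vertices, one at a time. -/
lemma isum_prod_ind (hlam : 0 < lam) (τ : V → Bool) (A : Finset V) :
    ∃ (c : ℝ) (T : Finset V), 0 ≤ c ∧
      ∀ g : Finset V → ℝ, (∀ v ∈ A, ∀ I, g (insert v I) = g I) →
        isum G lam Finset.univ (fun I => (∏ v ∈ A, ind v (τ v) I) * g I)
          = c * isum G lam T g := by
  induction A using Finset.induction_on with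
  | empty => exact ⟨1, Finset.univ, zero_le_one, fun g _ => by simp⟩
  | insert v A hv ih =>
    obtain ⟨c, T, hc, h⟩ := ih
    obtain ⟨c', T', hc', -, -, h'⟩ := isum_ind (G := G) hlam T v (τ v)
    refine ⟨c * c', T', mul_nonneg hc hc', fun g hg => ?_⟩
    have e : ∀ I : Finset V, (∏ u ∈ insert v A, ind u (τ u) I) * g I
        = (∏ u ∈ A, ind u (τ u) I) * (ind v (τ v) I * g I) := fun I => by
      rw [Finset.prod_insert hv]; ring
    rw [isum_congr fun I _ => e I, h, h' g fun I => hg v (Finset.mem_insert_self _ _) I, mul_assoc]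
    intro u hu I
    have huv : v ≠ u := fun h => hv (h ▸ hu)
    rw [hg u (Finset.mem_insert_of_mem hu)]
    simp [ind, huv]

lemma ind_insert {v w : V} (h : w ≠ v) (k : Bool) (I : Finset V) :
    ind w k (insert v I) = ind w k I := by
  simp [ind, h]

lemma isum_ind_div (hlam : 0 < lam) (T : Finset V) (w : V) (k : Bool) :
    isum G lam T (ind w k) / pf G lam T = if k then occ G lam T w else 1 - occ G lam T w := by
  have hZ := (pf_pos (G := G) hlam T).ne'
  cases k
  · have : isum G lam T (ind w false)
        = pf G lam T - isum G lam T (fun I => if w ∈ I then 1 else 0) := by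
      unfold pf isum
      rw [← Finset.sum_sub_distrib]
      refine Finset.sum_congr rfl fun I _ => ?_
      by_cases h : w ∈ I <;> by_cases h' : Indep G I <;> simp [ind, h, h']
    rw [this, sub_div, div_self hZ]
    simp [occ]
  · simp only [if_true, occ]
    congr 1
    exact isum_congr fun I _ => by simp [ind]

/-- A single entry of the influence matrix. Conditioning on `v` having spin `i` moves the law of the
spin of `w` by a convex weight times the influence of `v` on `w`. -/
lemma influence_entry (hlam : 0 < lam) {T : Finset V} {v w : V} (hw : w ≠ v) (i k : Bool)
    (hpos : 0 < isum G lam T (ind v i)) :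
    |isum G lam T (fun I => ind v i I * ind w k I) / isum G lam T (ind v i)
      - isum G lam T (ind w k) / pf G lam T|
    ≤ if v ∈ T then |occ G lam (cut G T v) w - occ G lam (T.erase v) w| else 0 := by
  obtain ⟨c, T', hc, h1, h2, h3⟩ := isum_ind (G := G) hlam T v i
  have e1 := h3 (fun _ => 1) fun _ => rfl
  simp only [mul_one] at e1
  change isum G lam T (ind v i) = c * pf G lam T' at e1
  have hc0 : c ≠ 0 := by
    rintro rfl
    rw [e1, zero_mul] at hpos
    exact lt_irrefl _ hpos
  rw [h3 (ind w k) (ind_insert hw k), e1, mul_div_mul_left _ _ hc0, isum_ind_div hlam,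
    isum_ind_div hlam]
  have e2 : |(if k = true then occ G lam T' w else 1 - occ G lam T' w)
      - (if k = true then occ G lam T w else 1 - occ G lam T w)|
      = |occ G lam T' w - occ G lam T w| := by
    cases k
    · simp only [Bool.false_eq_true, if_false]
      rw [abs_sub_comm]; congr 1; ring
    · simp
  rw [e2]
  by_cases hv : v ∈ T
  · rw [if_pos hv, h2 hv, occ_mix hlam hv hw]
    have p0 := occ_nonneg (G := G) hlam T v
    have p1 := (occ_lt_one (G := G) hlam T v).le
    set p := occ G lam T v
    cases i
    · simp only [Bool.false_eq_true, if_false]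
      rw [show ∀ a b : ℝ, b - (p * a + (1 - p) * b) = -(p * (a - b)) by intros; ring, abs_neg,
        abs_mul, abs_of_nonneg p0]
      exact mul_le_of_le_one_left (abs_nonneg _) p1
    · simp only [if_true]
      rw [show ∀ a b : ℝ, a - (p * a + (1 - p) * b) = (1 - p) * (a - b) by intros; ring,
        abs_mul, abs_of_nonneg (sub_nonneg.2 p1)]
      exact mul_le_of_le_one_left (abs_nonneg _) (by linarith)
  · rw [if_neg hv, h1 hv, sub_self, abs_zero]

/-- The configuration of a set of occupied vertices, restricted to `U`. -/
noncomputable def conf (U : Set V) (I : Finset V) : U → Bool := fun u => decide (u.1 ∈ I)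

/-- Events of the marginal distribution, in terms of occupied sets. -/
lemma pr_marginal (U : Set V) (A : Set (U → Bool)) :
    pr (marginal (hardCore G lam) U) A
      = isum G lam Finset.univ (fun I => if conf U I ∈ A then 1 else 0)
        / ∑ σ : V → Bool, hcWeight G lam σ := by
  obtain ⟨Z, hZ⟩ : ∃ Z, ∑ σ : V → Bool, hcWeight G lam σ = Z := ⟨_, rfl⟩
  rw [hZ]
  have e1 : pr (marginal (hardCore G lam) U) A
      = ∑ σ : V → Bool, if (fun u : U => σ u.1) ∈ A then hcWeight G lam σ / Z else 0 := by
    unfold pr marginal hardCore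
    simp only [hZ]
    have : ∀ τ : U → Bool, (if τ ∈ A then ∑ σ : V → Bool,
          (if ∀ u : U, σ u.1 = τ u then hcWeight G lam σ / Z else 0) else 0)
        = ∑ σ : V → Bool, if (fun u : U => σ u.1) = τ then
            (if (fun u : U => σ u.1) ∈ A then hcWeight G lam σ / Z else 0) else 0 := by
      intro τ
      by_cases h : τ ∈ A
      · rw [if_pos h]
        refine Finset.sum_congr rfl fun σ _ => ?_
        by_cases h2 : (fun u : U => σ u.1) = τ
        · have h3 : ∀ u : U, σ u.1 = τ u := fun u => congrFun h2 u
          have h4 : (fun u : U => σ u.1) ∈ A := by rw [h2]; exact h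
          rw [if_pos h2, if_pos h4, if_pos h3]
        · rw [if_neg h2, if_neg fun h3 => h2 (funext h3)]
      · rw [if_neg h]
        refine (Finset.sum_eq_zero fun σ _ => ?_).symm
        by_cases h2 : (fun u : U => σ u.1) = τ
        · rw [if_pos h2, if_neg (h2 ▸ h)]
        · rw [if_neg h2]
    rw [Finset.sum_congr rfl fun τ _ => this τ, Finset.sum_comm]
    refine Finset.sum_congr rfl fun σ _ => ?_
    rw [Finset.sum_ite_eq, if_pos (@Finset.mem_univ _ (_) _)]
  rw [e1]
  unfold isum
  rw [Finset.sum_div]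
  refine Finset.sum_nbij' (fun σ => Finset.univ.filter fun v => σ v = true)
    (fun I v => decide (v ∈ I)) (by simp) (by simp) ?_ ?_ ?_
  · intro σ _; funext v; simp
  · intro I _; ext v; simp
  · intro σ _
    have h1 : conf U (Finset.univ.filter fun v => σ v = true) = fun u : U => σ u.1 := by
      funext u; simp [conf]
    have h2 : Indep G (Finset.univ.filter fun v => σ v = true) ↔ IsIndepConf G σ := by
      simp only [Indep, IsIndepConf, Finset.mem_filter, Finset.mem_univ, true_and]
      exact ⟨fun h u v huv hh => h u hh.1 v hh.2 huv, fun h u hu v hv huv => h u v huv ⟨hu, hv⟩⟩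
    beta_reduce
    rw [h1]
    unfold hcWeight
    by_cases h3 : IsIndepConf G σ
    · rw [if_pos (h2.2 h3), if_pos h3]
      split_ifs <;> simp
    · rw [if_neg (fun h => h3 (h2.1 h)), if_neg h3]
      simp

lemma sum_hcWeight_pos (hlam : 0 < lam) : 0 < ∑ σ : V → Bool, hcWeight G lam σ := by
  refine Finset.sum_pos' (fun σ _ => by unfold hcWeight; split_ifs <;> positivity)
    ⟨fun _ => false, Finset.mem_univ _, ?_⟩
  simp [hcWeight, IsIndepConf]

/-- Uniform control of the influences of the vertices of `U` in the hard-core models on subsets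
gives spectral independence of the marginal on `U`. -/
lemma spectrallyIndependent_of_infl (hlam : 0 < lam) (U : Set V) {K : ℝ} (hK : 0 ≤ K)
    (h : ∀ T : Finset V, ∀ v ∈ T, v ∈ U → 2 * infl G lam T v ≤ K) :
    SpectrallyIndependent (marginal (hardCore G lam) U) K := by
  intro S τ _ hpos t x hx he
  -- Given the pinning `τ` of `S`, the model is a hard-core model on some set `T` of vertices.
  refine eigenvalue_le _ ?_ hx he
  clear he hx x
  have hZ := sum_hcWeight_pos (G := G) hlam
  set Z := ∑ σ : V → Bool, hcWeight G lam σ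
  set μ := marginal (hardCore G lam) U
  set A : Finset V := Finset.univ.filter fun v => ∃ hv : v ∈ U, (⟨v, hv⟩ : U) ∈ S
  set τ' : V → Bool := fun v => if hv : v ∈ U then τ ⟨v, hv⟩ else false
  have hA : ∀ u : U, u.1 ∈ A ↔ u ∈ S := fun u => by simp [A]
  obtain ⟨c, T, hc, hT⟩ := isum_prod_ind (G := G) hlam τ' A
  have hS : ∀ I : Finset V, ∏ v ∈ A, ind v (τ' v) I
      = if conf U I ∈ eventEq S τ then 1 else 0 := by
    intro I
    split_ifs with h1
    · refine Finset.prod_eq_one fun v hv => ?_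
      obtain ⟨hvU, hvS⟩ := (Finset.mem_filter.1 hv).2
      refine if_pos ?_
      have := h1 ⟨v, hvU⟩ hvS
      simpa [conf, τ', hvU] using this
    · obtain ⟨u, hu, hne⟩ : ∃ u ∈ S, conf U I u ≠ τ u := by
        simpa [eventEq] using h1
      refine Finset.prod_eq_zero ((hA u).2 hu) (if_neg fun h2 => hne ?_)
      simpa [conf, τ'] using h2
  have hpr : ∀ (E : Set (U → Bool)) (g : Finset V → ℝ),
      (∀ v ∈ A, ∀ I, g (insert v I) = g I) → (∀ I, g I = if conf U I ∈ E then 1 else 0) →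
      pr μ (E ∩ eventEq S τ) = c * isum G lam T g / Z := by
    intro E g hg hE
    rw [pr_marginal, ← hT g hg]
    congr 1
    refine isum_congr fun I _ => ?_
    rw [hS, hE]
    by_cases h1 : conf U I ∈ E <;> by_cases h2 : conf U I ∈ eventEq S τ <;> simp [h1, h2]
  have hval : ∀ (u : U) (i : Bool) (I : Finset V),
      ind u.1 i I = if conf U I ∈ eventVal u i then 1 else 0 := fun u i I => by
    unfold ind; exact if_congr Iff.rfl rfl rfl
  have hinv : ∀ (u : U) (i : Bool), u ∉ S → ∀ v ∈ A, ∀ I, ind u.1 i (insert v I) = ind u.1 i I :=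
    fun u i hu v hv I => ind_insert (fun h => hu ((hA u).1 (by rw [h]; exact hv))) i I
  have p0 : pr μ (eventEq S τ) = c * pf G lam T / Z := by
    rw [← Set.univ_inter (eventEq S τ)]
    exact hpr Set.univ _ (fun _ _ _ => rfl) fun I => by simp
  have hc0 : c ≠ 0 := by
    rintro rfl
    rw [p0] at hpos
    simp at hpos
  have hc1 : 0 < c := lt_of_le_of_ne hc (Ne.symm hc0)
  have p1 : ∀ (u : U) (i : Bool), u ∉ S →
      pr μ (eventVal u i ∩ eventEq S τ) = c * isum G lam T (ind u.1 i) / Z :=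
    fun u i hu => hpr _ _ (hinv u i hu) (hval u i)
  have p2 : ∀ (u w : U) (i k : Bool), u ∉ S → w ∉ S →
      pr μ (eventVal w k ∩ (eventEq S τ ∩ eventVal u i))
        = c * isum G lam T (fun I => ind u.1 i I * ind w.1 k I) / Z := by
    intro u w i k hu hw
    have e : eventVal w k ∩ (eventEq S τ ∩ eventVal u i)
        = (eventVal u i ∩ eventVal w k) ∩ eventEq S τ := by
      ext; simp only [Set.mem_inter_iff]; tauto
    rw [e]
    refine hpr _ _ (fun v hv I => by rw [hinv u i hu v hv, hinv w k hw v hv]) fun I => ?_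
    rw [hval, hval]
    by_cases h1 : conf U I ∈ eventVal u i <;> by_cases h2 : conf U I ∈ eventVal w k <;>
      simp [h1, h2]
  have cancel : ∀ a b : ℝ, c * a / Z / (c * b / Z) = a / b := by
    intro a b
    rw [div_div_div_cancel_right₀ hZ.ne', mul_div_mul_left _ _ hc0]
  have hcpr1 : ∀ (u : U) (i : Bool), u ∉ S →
      cpr μ (eventVal u i) (eventEq S τ) = isum G lam T (ind u.1 i) / pf G lam T := by
    intro u i hu
    rw [cpr, p1 u i hu, p0, cancel]
  have hcpr2 : ∀ (u w : U) (i k : Bool), u ∉ S → w ∉ S →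
      cpr μ (eventVal w k) (eventEq S τ ∩ eventVal u i)
        = isum G lam T (fun I => ind u.1 i I * ind w.1 k I) / isum G lam T (ind u.1 i) := by
    intro u w i k hu hw
    rw [cpr, p2 u w i k hu hw, Set.inter_comm (eventEq S τ), p1 u i hu, cancel]
  intro p
  obtain ⟨⟨v, i⟩, hvS, hvi⟩ := p
  rw [hcpr1 v i hvS] at hvi
  have hpT := pf_pos (G := G) hlam T
  have hvi' : 0 < isum G lam T (ind v.1 i) := by
    have := mul_pos hvi hpT
    rwa [div_mul_cancel₀ _ hpT.ne'] at this
  set f : V × Bool → ℝ := fun q =>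
    if v.1 ∈ T then |occ G lam (cut G T v.1) q.1 - occ G lam (T.erase v.1) q.1| else 0
  have hf : ∀ q, 0 ≤ f q := fun q => by simp only [f]; split_ifs <;> positivity
  have hsum : ∑ q, f q ≤ K := by
    by_cases hv : v.1 ∈ T
    · have := h T v.1 hv v.2
      simp only [f, if_pos hv, Fintype.sum_prod_type, Finset.sum_const, Finset.card_univ,
        Fintype.card_bool, nsmul_eq_mul, Nat.cast_ofNat, ← Finset.mul_sum]
      exact this
    · simp only [f, if_neg hv, Finset.sum_const_zero]
      exact hK
  refine le_trans (le_trans (Finset.sum_le_sum fun q _ => ?_)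
    (sum_comp_le (e := fun q : {p : U × Bool // p.1 ∉ S ∧
      0 < cpr μ (eventVal p.1 p.2) (eventEq S τ)} => ((q.1.1.1, q.1.2) : V × Bool)) ?_ hf)) hsum
  · obtain ⟨⟨w, k⟩, hwS, hwk⟩ := q
    simp only [Matrix.of_apply]
    by_cases hvw : v = w
    · rw [if_pos hvw, abs_zero]; exact hf _
    · rw [if_neg hvw, hcpr2 v w i k hvS hwS, hcpr1 w k hwS]
      exact influence_entry hlam (fun h => hvw (Subtype.ext h.symm)) i k hvi'
  · rintro ⟨⟨a, k⟩, _⟩ ⟨⟨b, l⟩, _⟩ hab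
    simp only [Prod.mk.injEq] at hab
    exact Subtype.ext (Prod.ext (Subtype.ext hab.1) hab.2)

end Spectral

/-! ### Spectral independence with high probability -/

/-- for `d ≥ 1` and `0 < λ < λ_c(d)`, for any constants `D, ε > 0`, whp over
`G ∼ G(n,d/n)` the marginal of the hard-core distribution on the set of vertices of degree
at most `D` is `(ε log n)`-spectrally independent. -/
theorem stmt2 (d lam : ℝ) (hd : 1 ≤ d) (hlam : 0 < lam) (hcrit : 1 < d → lam < lamc d)
    (D ε : ℝ) (hD : 0 < D) (hε : 0 < ε) :
    Filter.Tendsto (fun n : ℕ => erProb n (d / n) (fun G =>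
        SpectrallyIndependent
          (marginal (hardCore G lam) {v : Fin n | (deg G v : ℝ) ≤ D})
          (ε * Real.log n)))
      Filter.atTop (nhds 1) := by
  obtain ⟨Δ, hdΔ, hle⟩ := exists_larger_degree hd hlam hcrit
  have hd0 : 0 < d := by linarith
  have hΔ : 1 < Δ := by linarith
  -- Any discount strictly between `1 / Δ` and `1 / d` makes both halves of the argument work.
  obtain ⟨θ, hθ1, hθ2⟩ := exists_between (one_div_lt_one_div_of_lt hd0 hdΔ)
  have hθ0 : 0 < θ := lt_trans (by positivity) hθ1
  have hΔθ : 1 < Δ * θ := by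
    rw [div_lt_iff₀ (by linarith)] at hθ1; linarith
  have hdθ : d * θ < 1 := by
    rw [lt_div_iff₀ hd0] at hθ2; linarith
  have hθle : θ ≤ 1 := by nlinarith
  obtain ⟨γ, C, hγ0, hγ1, hC, hinfl⟩ := infl_le_saw hΔ hlam hle hΔθ hθ0
  obtain ⟨L, hL, hwhp⟩ := whp_saw hd0 hθ0.le hθle hdθ
  have hlog : Tendsto (fun n : ℕ => Real.log n) atTop atTop :=
    Real.tendsto_log_atTop.comp tendsto_natCast_atTop_atTop
  have hpow : Tendsto (fun n : ℕ => Real.log n ^ (1 - γ)) atTop atTop :=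
    (tendsto_rpow_atTop (by linarith)).comp hlog
  refine tendsto_of_tendsto_of_tendsto_of_le_of_le' hwhp tendsto_const_nhds ?_ ?_
  · filter_upwards [hlog.eventually_gt_atTop 0, hpow.eventually_ge_atTop (2 * D * C * L ^ γ / ε),
      eventually_ge_atTop ⌈d⌉₊, eventually_gt_atTop 0] with n h1 h2 h3 h4
    have hn : (0 : ℝ) < n := by exact_mod_cast h4
    have hdn : d ≤ n := Nat.ceil_le.1 h3
    refine erProb_mono (by positivity) ((div_le_one hn).2 hdn) fun G hG => ?_
    refine spectrallyIndependent_of_infl hlam _ (by positivity) fun T v hvT hvU => ?_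
    have hcard : T.card ≤ n := by simpa using Finset.card_le_univ T
    have hb := hinfl G (edges G) (mem_edges G) n T hcard v hvT
    have hB : (((T.erase v).filter fun u => G.Adj v u).card : ℝ) ≤ D := by
      refine le_trans ?_ hvU
      unfold deg
      rw [Nat.card_eq_fintype_card, Fintype.card_subtype]
      exact_mod_cast Finset.card_le_card fun u hu =>
        Finset.mem_filter.2 ⟨Finset.mem_univ _, (Finset.mem_filter.1 hu).2⟩
    have hM : 0 ≤ C * (L * Real.log n) ^ γ := by positivity
    have hb2 : infl G lam T v ≤ D * (C * (L * Real.log n) ^ γ) := by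
      refine hb.trans ((Finset.sum_le_card_nsmul _ _ (C * (L * Real.log n) ^ γ)
        fun u _ => ?_).trans ?_)
      · have s1 := saw_one_le hθ0.le (edges G) n T u
        have s2 := (saw_mono hθ0.le (edges G) n (Finset.subset_univ T) u).trans (hG u)
        gcongr
      · rw [nsmul_eq_mul]
        exact mul_le_mul_of_nonneg_right hB hM
    have h5 : Real.log n ^ γ * Real.log n ^ (1 - γ) = Real.log n := by
      rw [← Real.rpow_add h1]; simp
    rw [div_le_iff₀ hε] at h2
    have h6 : 0 < Real.log n ^ γ := Real.rpow_pos_of_pos h1 _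
    have h7 : 2 * infl G lam T v ≤ ε * Real.log n := by
      calc 2 * infl G lam T v ≤ 2 * (D * (C * (L * Real.log n) ^ γ)) := by linarith
        _ = 2 * D * C * L ^ γ * Real.log n ^ γ := by
            rw [Real.mul_rpow hL.le h1.le]; ring
        _ ≤ Real.log n ^ (1 - γ) * ε * Real.log n ^ γ := by gcongr
        _ = ε * (Real.log n ^ γ * Real.log n ^ (1 - γ)) := by ring
        _ = ε * Real.log n := by rw [h5]
    -- The two sides differ only in the `DecidableEq` instance.
    convert h7
  · filter_upwards [eventually_ge_atTop ⌈d⌉₊, eventually_gt_atTop 0] with n h3 h4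
    have hn : (0 : ℝ) < n := by exact_mod_cast h4
    exact erProb_le_one (by positivity) ((div_le_one hn).2 (Nat.ceil_le.1 h3)) _
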